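/- arXiv:math/0609586 — 4 statements merged into one kernel-verified Lean document; each statement's English description precedes it below -/
import Mathlib

section
/- Let p be a prime with p ≡ 3 (mod 4), m an odd positive integer, and G an abelian p-group of order p^m, written additively. Let D be a subset of G such that D ∩ (−D) = ∅ and D ∪ (−D) = G \ {0}, and such that tD = D for every integer t that is a nonzero quadratic residue modulo p. If for every nontrivial complex character φ of G the algebraic number (φ(D) − (p^{(m−1)/2} − 1)/2) / p^{(m−1)/2} is an algebraic integer (i.e., φ(D) ≡ (p^{(m−1)/2} − 1)/2 modulo p^{(m−1)/2} in the ring of algebraic integers), then D is a (p^m, (p^m − 1)/2, (p^m − 3)/4) difference set in G. -/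
/-- `D` is a `(v,k,λ)` difference set in the finite abelian group `G`. -/
def IsDiffSet {G : Type*} [AddCommGroup G] (D : Set G) (v k l : ℕ) : Prop :=
  Nat.card G = v ∧ Nat.card D = k ∧
    ∀ g : G, g ≠ 0 → Nat.card {p : G × G | p.1 ∈ D ∧ p.2 ∈ D ∧ p.1 - p.2 = g} = l

/-!
Put `v = p ^ m = p * q ^ 2`, with `q = p ^ ((m - 1) / 2)`, and `Y φ = φ(D) - φ(-D)`. Since `D` is
fixed by quadratic residues and exchanged with `-D` by non-residues, `Y (φ ^ n) = (n / p) * Y φ` for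
`n` prime to `p`. Weighting by `(n / p)` and summing over `n` expresses a nonzero integer multiple
of `Y φ` through quadratic Gauss sums, so `Y φ` is a rational multiple of `√(-p)`. The congruence
says that `Y φ / q` is an algebraic integer; as `-p` is squarefree, `Y φ / q` is then an integer
multiple of `√(-p)`, that is, `Y φ ^ 2 = -v * r ^ 2` with `r` an integer. Here `r ≠ 0`, because
`Y φ = 2 * φ(D) + 1` and `-1 / 2` is not an algebraic integer. By Plancherel the average of `r ^ 2`
over the nontrivial characters is `1`, so `r ^ 2 = 1` throughout. Thus `φ(D) * φ(-D) = (v + 1) / 4`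
for every `φ ≠ 1`, and Fourier inversion counts the differences.
-/

open Finset AddSubgroup

section Integrality

theorem isInteger_of_squarefree_mul_sq {A K : Type*} [CommRing A] [IsDomain A]
    [UniqueFactorizationMonoid A] [Field K] [Algebra A K] [IsFractionRing A K] {n : A}
    (hn : Squarefree n) {x : K} (hx : IsLocalization.IsInteger A (algebraMap A K n * x ^ 2)) :
    IsLocalization.IsInteger A x := by
  obtain ⟨c, hc⟩ := hx
  let a : A := IsFractionRing.num A x
  let b : A := IsFractionRing.den A x
  have hb : algebraMap A K b ≠ 0 := by simp [b]
  have hxab : x = algebraMap A K a / algebraMap A K b := by simp [a, b]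
  have hclear : c * b ^ 2 = n * a ^ 2 := by
    apply IsFractionRing.injective A K
    rw [hxab] at hc
    simp only [map_mul, map_pow, hc]
    field_simp
  have hrel : IsRelPrime (b ^ 2) (a ^ 2) := (IsFractionRing.num_den_reduced A x).symm.pow
  have hdvd : b * b ∣ n :=
    pow_two b ▸ hrel.dvd_of_dvd_mul_right (hclear ▸ dvd_mul_left (b ^ 2) c)
  exact IsFractionRing.isInteger_of_isUnit_den (hn b hdvd)

theorem mem_zmultiples_of_isIntegral {K : Type*} [Field K] [CharZero K] {n : ℤ}
    (hn : Squarefree n) {g y : K} (hg : g ^ 2 = n) {k : ℤ} (hk : k ≠ 0)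
    (hky : k • y ∈ zmultiples g) (hy : IsIntegral ℤ y) : y ∈ zmultiples g := by
  obtain ⟨c, hc⟩ := mem_zmultiples_iff.1 hky
  have hkK : (k : K) ≠ 0 := mod_cast hk
  have hyg : y = ((c / k : ℚ) : K) * g := by
    simp only [zsmul_eq_mul] at hc
    push_cast
    field_simp
    linear_combination -hc
  have hint : IsIntegral ℤ ((n : ℚ) * (c / k : ℚ) ^ 2) := by
    refine (isIntegral_algebraMap_iff (algebraMap ℚ K).injective).1 ?_
    convert hy.pow 2 using 1
    rw [hyg, mul_pow, hg]
    simp [mul_comm]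
  obtain ⟨r, hr⟩ := isInteger_of_squarefree_mul_sq (K := ℚ) hn
    (IsIntegrallyClosed.isIntegral_iff.1 hint)
  refine mem_zmultiples_iff.2 ⟨r, ?_⟩
  rw [hyg, ← hr]
  simp

theorem two_mul_ne_neg_one_of_isIntegral {K : Type*} [Field K] [CharZero K] {x : K}
    (hx : IsIntegral ℤ x) : 2 * x ≠ -1 := by
  intro h
  have hhalf : x = algebraMap ℚ K (-1 / 2) := by
    simp only [map_div₀, map_neg, map_one, map_ofNat]
    linear_combination h / 2
  rw [hhalf, isIntegral_algebraMap_iff (algebraMap ℚ K).injective,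
    IsIntegrallyClosed.isIntegral_iff] at hx
  obtain ⟨n, hn⟩ := hx
  have hn2 : (2 * n : ℚ) = -1 := by
    rw [eq_intCast] at hn
    rw [hn]
    norm_num
  have : 2 * n = -1 := mod_cast hn2
  omega

end Integrality

section GaussSum

theorem sum_range_mul_periodic_mul_pow {R : Type*} [CommSemiring R] {f : ℕ → R} {p : ℕ}
    (hf : Function.Periodic f p) (M : ℕ) (z : R) :
    ∑ n ∈ range (p * M), f n * z ^ n =
      (∑ k ∈ range M, (z ^ p) ^ k) * ∑ r ∈ range p, f r * z ^ r := by
  induction M with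
  | zero => simp
  | succ M ih =>
    rw [Nat.mul_succ, sum_range_add, ih, sum_range_succ, add_mul]
    congr 1
    rw [mul_sum]
    refine sum_congr rfl fun r _ => ?_
    have hshift : f (p * M + r) = f r := by
      rw [add_comm, mul_comm]
      exact hf.nat_mul M r
    rw [hshift]
    ring

theorem gaussSum_mem_zmultiples {F : Type*} [Field F] [Fintype F] {χ : MulChar F ℂ}
    (hχ : χ ≠ 1) (hχ₂ : χ.IsQuadratic) {ψ : AddChar F ℂ} (hψ : ψ.IsPrimitive)
    (ψ' : AddChar F ℂ) : gaussSum χ ψ' ∈ zmultiples (gaussSum χ ψ) := by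
  have hbij : Function.Bijective ψ.mulShift :=
    (Fintype.bijective_iff_injective_and_card _).2
      ⟨AddChar.to_mulShift_inj_of_isPrimitive hψ, AddChar.card_eq.symm⟩
  obtain ⟨a, rfl⟩ := hbij.surjective ψ'
  by_cases ha : a = 0
  · rw [ha, AddChar.mulShift_zero, gaussSum_one_right hχ]
    exact zero_mem _
  · have hshift := gaussSum_mulShift_eq χ ψ (Units.mk0 a ha)
    rw [Units.val_mk0] at hshift
    rw [hshift, hχ₂.inv]
    rcases hχ₂ a with h | h | h <;> simp [h]

variable (p : ℕ) [Fact p.Prime]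

/-- The Legendre symbol modulo `p` as a complex-valued multiplicative character. -/
noncomputable def legendreChar : MulChar (ZMod p) ℂ :=
  (quadraticChar (ZMod p)).ringHomComp (Int.castRingHom ℂ)

/-- The quadratic Gauss sum `∑ a, (a / p) * exp (2πia / p)`, which plays the role of `√(-p)` when
`p % 4 = 3`. -/
noncomputable def quadraticGaussSum : ℂ :=
  gaussSum (legendreChar p) ZMod.stdAddChar

variable {p}

theorem legendreChar_intCast (t : ℤ) : legendreChar p t = legendreSym p t := rfl

theorem isQuadratic_legendreChar : (legendreChar p).IsQuadratic :=
  (quadraticChar_isQuadratic (ZMod p)).comp _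

theorem legendreChar_ne_one (hp : p ≠ 2) : legendreChar p ≠ 1 := by
  rw [legendreChar, MulChar.ringHomComp_ne_one_iff Int.cast_injective]
  exact quadraticChar_ne_one (by rwa [ZMod.ringChar_zmod_n])

theorem legendreSym_neg (hp : p % 4 = 3) (t : ℤ) : legendreSym p (-t) = -legendreSym p t := by
  rw [legendreSym.at_neg (by omega), ZMod.χ₄_nat_three_mod_four hp, neg_one_mul]

theorem quadraticGaussSum_sq (hp : p % 4 = 3) : quadraticGaussSum p ^ 2 = -p := by
  have hneg : legendreChar p (-1) = -1 := by
    have := legendreChar_intCast (p := p) (-1)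
    rwa [legendreSym_neg hp, legendreSym.at_one, Int.cast_neg, Int.cast_neg, Int.cast_one,
      Int.cast_one] at this
  rw [quadraticGaussSum, gaussSum_sq (χ := legendreChar p) (legendreChar_ne_one (by omega))
    isQuadratic_legendreChar (ZMod.isPrimitive_stdAddChar p), hneg, ZMod.card, neg_one_mul]

theorem sum_range_legendreSym_mul_pow_eq_gaussSum {z : ℂ} (hz : z ^ p = 1) :
    ∑ n ∈ range p, (legendreSym p n : ℂ) * z ^ n =
      gaussSum (legendreChar p) (AddChar.zmodChar p hz) := by
  refine sum_nbij' (fun n : ℕ => (n : ZMod p)) ZMod.val (fun _ _ => mem_univ _)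
    (fun a _ => mem_range.2 (ZMod.val_lt a)) (fun n hn => ZMod.val_cast_of_lt (mem_range.1 hn))
    (fun a _ => ZMod.natCast_zmod_val a) fun n _ => ?_
  rw [AddChar.zmodChar_apply', ← legendreChar_intCast, Int.cast_natCast]

theorem sum_range_legendreSym_mul_pow_mem_zmultiples (hp : p ≠ 2) {N : ℕ} (hN : p ∣ N) {z : ℂ}
    (hz : z ^ N = 1) :
    ∑ n ∈ range N, (legendreSym p n : ℂ) * z ^ n ∈ zmultiples (quadraticGaussSum p) := by
  obtain ⟨M, rfl⟩ := hN
  have hper : Function.Periodic (fun n : ℕ => (legendreSym p n : ℂ)) p := fun n => by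
    simp [legendreSym]
  rw [sum_range_mul_periodic_mul_pow hper]
  by_cases hzp : z ^ p = 1
  · rw [sum_range_legendreSym_mul_pow_eq_gaussSum hzp]
    simp only [hzp, one_pow, sum_const, card_range, nsmul_one, ← nsmul_eq_mul]
    exact nsmul_mem (gaussSum_mem_zmultiples (legendreChar_ne_one hp) isQuadratic_legendreChar
      (ZMod.isPrimitive_stdAddChar p) _) M
  · rw [geom_sum_eq hzp, ← pow_mul, hz, sub_self, zero_div, zero_mul]
    exact zero_mem _

end GaussSum

section CharSum

variable {G R : Type*} [AddCommGroup G] [CommRing R]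

/-- The character sum `φ(D) = ∑ d ∈ D, φ d`. The sum over `-D` is `charSum φ⁻¹ D`. -/
def charSum (φ : AddChar G R) (D : Finset G) : R :=
  ∑ d ∈ D, φ d

/-- The difference `φ(D) - φ(-D)`; for finite `G` and `R = ℂ` it is `2i` times the imaginary part
of `φ(D)`. -/
def skewCharSum (φ : AddChar G R) (D : Finset G) : R :=
  charSum φ D - charSum φ⁻¹ D

theorem charSum_one (D : Finset G) : charSum (1 : AddChar G R) D = #D := by
  simp [charSum]

theorem isIntegral_charSum [Finite G] (φ : AddChar G R) (D : Finset G) :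
    IsIntegral ℤ (charSum φ D) := by
  refine IsIntegral.sum _ fun d _ => IsIntegral.of_pow (Nat.card_pos (α := G)) ?_
  rw [← AddChar.map_nsmul_eq_pow, card_nsmul_eq_zero', AddChar.map_zero_eq_one]
  exact isIntegral_one

theorem skewCharSum_inv (φ : AddChar G R) (D : Finset G) :
    skewCharSum φ⁻¹ D = -skewCharSum φ D := by
  simp [skewCharSum]

theorem charSum_zpow_of_image_eq {K : Type*} [Field K] (φ : AddChar G K) {D : Finset G} {t : ℤ}
    (ht : (fun d => t • d) '' (D : Set G) = D) : charSum (φ ^ t) D = charSum φ D := by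
  classical
  have himage : D.image (fun d => t • d) = D := by
    apply coe_injective
    rw [coe_image, ht]
  have hinj : Set.InjOn (fun d => t • d) (D : Set G) := card_image_iff.1 (by rw [himage])
  calc charSum (φ ^ t) D = ∑ d ∈ D, φ (t • d) := by
        simp only [charSum, AddChar.zpow_apply, AddChar.map_zsmul_eq_zpow]
    _ = charSum φ D := by rw [← sum_image hinj, himage, charSum]

theorem skewCharSum_zpow_of_image_eq {K : Type*} [Field K] (φ : AddChar G K) {D : Finset G} {t : ℤ}
    (ht : (fun d => t • d) '' (D : Set G) = D) : skewCharSum (φ ^ t) D = skewCharSum φ D := by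
  rw [skewCharSum, ← inv_zpow, charSum_zpow_of_image_eq φ ht, charSum_zpow_of_image_eq φ⁻¹ ht,
    skewCharSum]

theorem sum_charSum_mul_charSum_inv_mul_apply_neg [Fintype G] [DecidableEq G] (D : Finset G)
    (g : G) :
    ∑ φ : AddChar G ℂ, charSum φ D * charSum φ⁻¹ D * φ (-g) =
      Fintype.card G * #{q ∈ D ×ˢ D | q.1 - q.2 = g} := by
  have hexpand (φ : AddChar G ℂ) :
      charSum φ D * charSum φ⁻¹ D * φ (-g) = ∑ q ∈ D ×ˢ D, φ (q.1 - q.2 - g) := by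
    rw [charSum, charSum, sum_mul_sum, ← sum_product', sum_mul]
    simp only [AddChar.inv_apply, sub_eq_add_neg, AddChar.map_add_eq_mul]
  simp_rw [hexpand]
  rw [sum_comm]
  simp_rw [AddChar.sum_apply_eq_ite, sub_eq_zero]
  rw [← sum_filter, sum_const, nsmul_eq_mul, mul_comm]

theorem card_sq_add_sum_charSum_mul_charSum_inv_mul_apply_neg [Fintype G] [DecidableEq G]
    (D : Finset G) (g : G) :
    (#D : ℂ) ^ 2 + ∑ φ ∈ univ.erase (1 : AddChar G ℂ), charSum φ D * charSum φ⁻¹ D * φ (-g) =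
      Fintype.card G * #{q ∈ D ×ˢ D | q.1 - q.2 = g} := by
  rw [← sum_charSum_mul_charSum_inv_mul_apply_neg, ← add_sum_erase _ _ (mem_univ 1)]
  simp [charSum_one, pow_two]

theorem card_sq_add_sum_charSum_mul_charSum_inv [Fintype G] (D : Finset G) :
    (#D : ℂ) ^ 2 + ∑ φ ∈ univ.erase (1 : AddChar G ℂ), charSum φ D * charSum φ⁻¹ D =
      Fintype.card G * #D := by
  classical
  have hdiag : {q ∈ D ×ˢ D | q.1 - q.2 = 0} = D.diag := by
    ext q
    simp only [mem_filter, mem_product, sub_eq_zero, mem_diag]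
    grind
  have := card_sq_add_sum_charSum_mul_charSum_inv_mul_apply_neg D 0
  simpa only [neg_zero, AddChar.map_zero_eq_one, mul_one, hdiag, diag_card] using this

end CharSum

section ResidueInvariant

variable {G : Type*} [AddCommGroup G] {p : ℕ} [Fact p.Prime] {D : Finset G}

variable (p) in
/-- `tD = D` for every integer `t` that is a nonzero quadratic residue modulo `p`. -/
def IsResidueInvariant (D : Set G) : Prop :=
  ∀ t : ℤ, legendreSym p t = 1 → (fun d => t • d) '' D = D

theorem isResidueInvariant_iff {D : Set G} :
    IsResidueInvariant p D ↔ ∀ t : ℤ, ¬ (p : ℤ) ∣ t → (∃ u : ℤ, (p : ℤ) ∣ t - u ^ 2) →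
      (fun d => t • d) '' D = D := by
  have hzero (t : ℤ) : (t : ZMod p) = 0 ↔ (p : ℤ) ∣ t := ZMod.intCast_zmod_eq_zero_iff_dvd t p
  have hsquare {t : ℤ} (ht : ¬ (p : ℤ) ∣ t) :
      legendreSym p t = 1 ↔ ∃ u : ℤ, (p : ℤ) ∣ t - u ^ 2 := by
    rw [legendreSym.eq_one_iff p (mt (hzero t).1 ht), isSquare_iff_exists_sq,
      ZMod.intCast_surjective.exists]
    simp only [← hzero, Int.cast_sub, Int.cast_pow, sub_eq_zero]
  have hndvd {t : ℤ} (ht : legendreSym p t = 1) : ¬ (p : ℤ) ∣ t := by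
    rw [← hzero, ← legendreSym.eq_zero_iff, ht]
    exact one_ne_zero
  exact ⟨fun h t ht hu => h t ((hsquare ht).2 hu),
    fun h t ht => h t (hndvd ht) ((hsquare (hndvd ht)).1 ht)⟩

theorem IsResidueInvariant.skewCharSum_zpow {K : Type*} [Field K] (hp : p % 4 = 3)
    (hD : IsResidueInvariant p (D : Set G)) (φ : AddChar G K) {t : ℤ} (ht : (t : ZMod p) ≠ 0) :
    skewCharSum (φ ^ t) D = legendreSym p t * skewCharSum φ D := by
  rcases legendreSym.eq_one_or_neg_one p ht with h | h
  · simp [skewCharSum_zpow_of_image_eq φ (hD t h), h]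
  · have hneg : legendreSym p (-t) = 1 := by rw [legendreSym_neg hp, h, neg_neg]
    rw [h, ← skewCharSum_zpow_of_image_eq φ (hD (-t) hneg), zpow_neg, skewCharSum_inv]
    simp

theorem IsResidueInvariant.exists_zsmul_skewCharSum_mem_zmultiples [Fintype G] (hp : p % 4 = 3)
    (hD : IsResidueInvariant p (D : Set G)) (hG : p ∣ Fintype.card G) (φ : AddChar G ℂ) :
    ∃ k : ℤ, k ≠ 0 ∧ k • skewCharSum φ D ∈ zmultiples (quadraticGaussSum p) := by
  set N := Fintype.card G
  have hN : 1 < N := (Fact.out : p.Prime).one_lt.trans_le (Nat.le_of_dvd Fintype.card_pos hG)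
  have htwist (n : ℕ) : (legendreSym p n : ℂ) ^ 2 * skewCharSum φ D =
      ∑ d ∈ D, (legendreSym p n * φ d ^ n - legendreSym p n * φ (-d) ^ n) := by
    have hsum : skewCharSum (φ ^ (n : ℤ)) D = ∑ d ∈ D, (φ d ^ n - φ (-d) ^ n) := by
      simp [skewCharSum, charSum]
    simp only [← mul_sub, ← mul_sum, ← hsum]
    by_cases hn : ((n : ℤ) : ZMod p) = 0
    · simp [(legendreSym.eq_zero_iff p n).2 hn]
    · rw [hD.skewCharSum_zpow hp φ hn, pow_two, mul_assoc]
  have hroot (d : G) : φ d ^ N = 1 := by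
    rw [← AddChar.map_nsmul_eq_pow, card_nsmul_eq_zero, AddChar.map_zero_eq_one]
  refine ⟨∑ n ∈ range N, legendreSym p n ^ 2, ?_, ?_⟩
  · refine (sum_pos' (fun n _ => sq_nonneg _) ⟨1, mem_range.2 hN, ?_⟩).ne'
    simp
  · have hswap : (∑ n ∈ range N, legendreSym p n ^ 2) • skewCharSum φ D =
        ∑ d ∈ D, (∑ n ∈ range N, (legendreSym p n : ℂ) * φ d ^ n -
          ∑ n ∈ range N, (legendreSym p n : ℂ) * φ (-d) ^ n) := by
      simp only [zsmul_eq_mul, Int.cast_sum, Int.cast_pow, sum_mul, htwist]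
      rw [sum_comm]
      simp only [sum_sub_distrib]
    rw [hswap]
    exact sum_mem fun d _ =>
      sub_mem (sum_range_legendreSym_mul_pow_mem_zmultiples (by omega) hG (hroot d))
        (sum_range_legendreSym_mul_pow_mem_zmultiples (by omega) hG (hroot (-d)))

theorem IsResidueInvariant.exists_skewCharSum_sq_eq [Fintype G] (hp : p % 4 = 3)
    (hD : IsResidueInvariant p (D : Set G)) {q : ℕ} (hG : Fintype.card G = p * q ^ 2)
    {φ : AddChar G ℂ} (hφ : IsIntegral ℤ (skewCharSum φ D / q)) :
    ∃ r : ℤ, skewCharSum φ D ^ 2 = -(Fintype.card G * r ^ 2) := by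
  have hq : q ≠ 0 := by
    rintro rfl
    exact Fintype.card_ne_zero (α := G) (by simp [hG])
  have hqC : (q : ℂ) ≠ 0 := mod_cast hq
  obtain ⟨k, hk, hmem⟩ := hD.exists_zsmul_skewCharSum_mem_zmultiples hp ⟨q ^ 2, hG⟩ φ
  have hsqfree : Squarefree (-p : ℤ) :=
    (Nat.prime_iff_prime_int.1 Fact.out).neg.squarefree
  have hsq : quadraticGaussSum p ^ 2 = ((-p : ℤ) : ℂ) := by
    rw [quadraticGaussSum_sq hp]
    push_cast
    rfl
  have hscale : (k * q) • (skewCharSum φ D / q) = k • skewCharSum φ D := by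
    simp only [zsmul_eq_mul, Int.cast_mul, Int.cast_natCast]
    field_simp
  obtain ⟨r, hr⟩ := mem_zmultiples_iff.1 <| mem_zmultiples_of_isIntegral hsqfree hsq
    (mul_ne_zero hk (mod_cast hq)) (hscale ▸ hmem) hφ
  refine ⟨r, ?_⟩
  rw [eq_div_iff hqC, zsmul_eq_mul] at hr
  rw [← hr, hG, mul_pow, mul_pow, quadraticGaussSum_sq hp]
  push_cast
  ring

end ResidueInvariant

section Skew

variable {G : Type*} [AddCommGroup G]

/-- `D` is of skew type: the nonzero elements of `G` are split between `D` and `-D`. -/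
structure IsSkew (D : Set G) : Prop where
  disjoint_neg : Disjoint D (-D)
  union_neg : D ∪ -D = {0}ᶜ

namespace IsSkew

variable {D : Finset G}

open scoped Pointwise in
theorem sum_add_sum_neg [Fintype G] {M : Type*} [AddCommMonoid M] (hD : IsSkew (D : Set G))
    (f : G → M) :
    ∑ d ∈ D, f d + ∑ d ∈ D, f (-d) + f 0 = ∑ g, f g := by
  classical
  have hdisj : Disjoint D (-D) := disjoint_coe.1 (by simpa using hD.disjoint_neg)
  have hunion : D ∪ -D = {0}ᶜ := coe_injective (by simpa using hD.union_neg)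
  rw [← sum_neg_index, ← sum_union hdisj, hunion, ← sum_compl_add_sum {0} f, sum_singleton]

theorem two_mul_card_add_one [Fintype G] (hD : IsSkew (D : Set G)) :
    2 * #D + 1 = Fintype.card G := by
  have := hD.sum_add_sum_neg fun _ => 1
  simpa [two_mul] using this

section Finite

variable [Finite G] {R : Type*} [CommRing R] [IsDomain R] {φ : AddChar G R}

theorem charSum_add_charSum_inv (hD : IsSkew (D : Set G)) (hφ : φ ≠ 1) :
    charSum φ D + charSum φ⁻¹ D = -1 := by
  have := Fintype.ofFinite G
  have := hD.sum_add_sum_neg φ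
  rw [AddChar.sum_eq_zero_of_ne_one hφ, AddChar.map_zero_eq_one] at this
  exact eq_neg_of_add_eq_zero_left this

theorem skewCharSum_eq (hD : IsSkew (D : Set G)) (hφ : φ ≠ 1) :
    skewCharSum φ D = 2 * charSum φ D + 1 := by
  rw [skewCharSum]
  linear_combination -hD.charSum_add_charSum_inv hφ

theorem four_mul_charSum_mul_charSum_inv (hD : IsSkew (D : Set G)) (hφ : φ ≠ 1) :
    4 * (charSum φ D * charSum φ⁻¹ D) = 1 - skewCharSum φ D ^ 2 := by
  rw [skewCharSum]
  linear_combination (charSum φ D + charSum φ⁻¹ D - 1) * hD.charSum_add_charSum_inv hφ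

theorem skewCharSum_ne_zero {K : Type*} [Field K] [CharZero K] (hD : IsSkew (D : Set G))
    {φ : AddChar G K} (hφ : φ ≠ 1) : skewCharSum φ D ≠ 0 := by
  rw [hD.skewCharSum_eq hφ]
  exact fun h => two_mul_ne_neg_one_of_isIntegral (isIntegral_charSum φ D)
    (eq_neg_of_add_eq_zero_left h)

theorem isIntegral_skewCharSum_div {K : Type*} [Field K] [CharZero K] (hD : IsSkew (D : Set G))
    {φ : AddChar G K} (hφ : φ ≠ 1) {q : K} (h : IsIntegral ℤ ((charSum φ D - (q - 1) / 2) / q)) :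
    IsIntegral ℤ (skewCharSum φ D / q) := by
  rcases eq_or_ne q 0 with rfl | hq
  · simpa using isIntegral_zero
  have hsplit : skewCharSum φ D / q = 2 * ((charSum φ D - (q - 1) / 2) / q) + 1 := by
    rw [hD.skewCharSum_eq hφ]
    field_simp
    ring
  rw [hsplit, two_mul]
  exact (h.add h).add isIntegral_one

end Finite

variable [Fintype G]

theorem sum_skewCharSum_sq (hD : IsSkew (D : Set G)) :
    ∑ φ ∈ univ.erase (1 : AddChar G ℂ), skewCharSum φ D ^ 2 =
      -(Fintype.card G * (Fintype.card G - 1)) := by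
  have hcard : (Fintype.card G : ℂ) = 2 * #D + 1 := mod_cast hD.two_mul_card_add_one.symm
  have hsum : ∑ φ ∈ univ.erase (1 : AddChar G ℂ), 4 * (charSum φ D * charSum φ⁻¹ D) =
      Fintype.card G - 1 - ∑ φ ∈ univ.erase (1 : AddChar G ℂ), skewCharSum φ D ^ 2 := by
    rw [sum_congr rfl fun φ hφ => hD.four_mul_charSum_mul_charSum_inv (ne_of_mem_erase hφ),
      sum_sub_distrib, sum_const, nsmul_one, card_erase_of_mem (mem_univ _), card_univ,
      AddChar.card_eq, Nat.cast_pred Fintype.card_pos]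
  rw [← mul_sum] at hsum
  have hplancherel := card_sq_add_sum_charSum_mul_charSum_inv D
  rw [hcard] at hsum hplancherel ⊢
  linear_combination hsum - 4 * hplancherel

theorem skewCharSum_sq_eq_neg_card (hD : IsSkew (D : Set G))
    (h : ∀ φ : AddChar G ℂ, φ ≠ 1 → ∃ r : ℤ, skewCharSum φ D ^ 2 = -(Fintype.card G * r ^ 2))
    {φ : AddChar G ℂ} (hφ : φ ≠ 1) : skewCharSum φ D ^ 2 = -Fintype.card G := by
  choose! r hr using h
  have hpos : ∀ ψ ∈ univ.erase (1 : AddChar G ℂ), 1 ≤ r ψ ^ 2 := by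
    intro ψ hψ
    have hψ1 := ne_of_mem_erase hψ
    have hr0 : r ψ ≠ 0 := fun h0 => hD.skewCharSum_ne_zero hψ1 (by simpa [h0] using hr ψ hψ1)
    have := sq_pos_of_ne_zero hr0
    omega
  have hsum : ∑ _ψ ∈ univ.erase (1 : AddChar G ℂ), 1 = ∑ ψ ∈ univ.erase 1, r ψ ^ 2 := by
    have hC : (Fintype.card G : ℂ) * ∑ ψ ∈ univ.erase 1, (r ψ : ℂ) ^ 2 =
        Fintype.card G * (Fintype.card G - 1) := by
      rw [mul_sum, ← neg_inj, ← sum_neg_distrib, ← hD.sum_skewCharSum_sq]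
      exact sum_congr rfl fun ψ hψ => (hr ψ (ne_of_mem_erase hψ)).symm
    have hC' := mul_left_cancel₀ (Nat.cast_ne_zero.2 Fintype.card_ne_zero) hC
    rw [sum_const, card_erase_of_mem (mem_univ _), card_univ, AddChar.card_eq, nsmul_one,
      Nat.cast_pred Fintype.card_pos]
    exact_mod_cast hC'.symm
  have hr1 := (sum_eq_sum_iff_of_le hpos).1 hsum φ (mem_erase.2 ⟨hφ, mem_univ _⟩)
  have hr1C : (r φ : ℂ) ^ 2 = 1 := mod_cast hr1.symm
  rw [hr φ hφ, hr1C, mul_one]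

theorem four_mul_card_filter_sub_eq_add_three [DecidableEq G] (hD : IsSkew (D : Set G))
    (h : ∀ φ : AddChar G ℂ, φ ≠ 1 → skewCharSum φ D ^ 2 = -Fintype.card G) {g : G} (hg : g ≠ 0) :
    4 * #{q ∈ D ×ˢ D | q.1 - q.2 = g} + 3 = Fintype.card G := by
  have hcard : (Fintype.card G : ℂ) = 2 * #D + 1 := mod_cast hD.two_mul_card_add_one.symm
  have hsum : ∑ φ ∈ univ.erase (1 : AddChar G ℂ), φ (-g) = -1 := by
    have := add_sum_erase _ (fun φ : AddChar G ℂ => φ (-g)) (mem_univ 1)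
    rw [AddChar.sum_apply_eq_zero_iff_ne_zero.2 (neg_ne_zero.2 hg), AddChar.one_apply] at this
    exact eq_neg_of_add_eq_zero_right this
  have hcoeff : ∑ φ ∈ univ.erase (1 : AddChar G ℂ), charSum φ D * charSum φ⁻¹ D * φ (-g) =
      (1 + Fintype.card G) / 4 * ∑ φ ∈ univ.erase (1 : AddChar G ℂ), φ (-g) := by
    rw [mul_sum]
    refine sum_congr rfl fun φ hφ => ?_
    have hφ1 := ne_of_mem_erase hφ
    linear_combination φ (-g) / 4 * (hD.four_mul_charSum_mul_charSum_inv hφ1 - h φ hφ1)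
  have hinv := card_sq_add_sum_charSum_mul_charSum_inv_mul_apply_neg D g
  rw [hcoeff, hsum] at hinv
  have hC : (Fintype.card G : ℂ) * (4 * #{q ∈ D ×ˢ D | q.1 - q.2 = g} + 3) =
      Fintype.card G * Fintype.card G := by
    rw [hcard] at hinv ⊢
    linear_combination -4 * hinv
  exact_mod_cast mul_left_cancel₀ (Nat.cast_ne_zero.2 Fintype.card_ne_zero) hC

theorem isDiffSet (hD : IsSkew (D : Set G))
    (h : ∀ φ : AddChar G ℂ, φ ≠ 1 → skewCharSum φ D ^ 2 = -Fintype.card G) :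
    IsDiffSet (D : Set G) (Fintype.card G) ((Fintype.card G - 1) / 2)
      ((Fintype.card G - 3) / 4) := by
  classical
  refine ⟨Nat.card_eq_fintype_card, ?_, fun g hg => ?_⟩
  · have := hD.two_mul_card_add_one
    rw [Nat.card_coe_set_eq, Set.ncard_coe_finset]
    omega
  · have hcount : {q : G × G | q.1 ∈ (D : Set G) ∧ q.2 ∈ (D : Set G) ∧ q.1 - q.2 = g} =
        ({q ∈ D ×ˢ D | q.1 - q.2 = g} : Finset (G × G)) := by
      ext q
      simp [and_assoc]
    rw [hcount, Nat.card_coe_set_eq, Set.ncard_coe_finset]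
    have := hD.four_mul_card_filter_sub_eq_add_three h hg
    omega

end IsSkew

end Skew

theorem congruence_implies_diffSet {G : Type*} [AddCommGroup G] [Fintype G]
    (p m : ℕ) (hp : p.Prime) (hp4 : p % 4 = 3) (hm : Odd m)
    (hcard : Fintype.card G = p ^ m)
    (D : Set G)
    (hdisj : Disjoint D (-D)) (hcover : D ∪ (-D) = ({0}ᶜ : Set G))
    (hfix : ∀ t : ℤ, ¬ (p : ℤ) ∣ t → (∃ u : ℤ, (p : ℤ) ∣ t - u ^ 2) →
      (fun d => t • d) '' D = D)
    (hcong : ∀ φ : AddChar G ℂ, φ ≠ 1 →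
      IsIntegral ℤ
        (((∑ᶠ d ∈ D, φ d) - ((p : ℂ) ^ ((m - 1) / 2) - 1) / 2) / (p : ℂ) ^ ((m - 1) / 2))) :
    IsDiffSet D (p ^ m) ((p ^ m - 1) / 2) ((p ^ m - 3) / 4) := by
  have : Fact p.Prime := ⟨hp⟩
  lift D to Finset G using D.toFinite
  have hskew : IsSkew (D : Set G) := ⟨hdisj, hcover⟩
  have hres : IsResidueInvariant p (D : Set G) := isResidueInvariant_iff.2 hfix
  have hpm : p ^ m = p * (p ^ ((m - 1) / 2)) ^ 2 := by
    obtain ⟨j, rfl⟩ := hm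
    rw [← pow_mul, ← pow_succ']
    congr 1
    omega
  have hint (φ : AddChar G ℂ) (hφ : φ ≠ 1) :
      IsIntegral ℤ (skewCharSum φ D / (p ^ ((m - 1) / 2) : ℕ)) := by
    refine hskew.isIntegral_skewCharSum_div hφ ?_
    simpa only [charSum, finsum_mem_coe_finset, Nat.cast_pow] using hcong φ hφ
  rw [← hcard]
  exact hskew.isDiffSet fun φ => hskew.skewCharSum_sq_eq_neg_card fun ψ hψ =>
    hres.exists_skewCharSum_sq_eq hp4 (hcard.trans hpm) (hint ψ hψ)
end

section
/- Let q = 3^{2h+1} with h ≥ 0, α = 3^{h+1}, and let a ∈ F_q*. Then the set D_a = {f_a(x²) : x ∈ F_q*}, where f_a(x) = x^{2α+3} + a^α x^α − a² x, is a skew Hadamard difference set in the additive group (F_q, +); that is, D_a is a (q, (q−1)/2, (q−3)/4) difference set and F_q is the disjoint union of D_a, −D_a, and {0}. -/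
/-- `D` is skew Hadamard: `G` is the disjoint union of `D`, `-D` and `{0}`. -/
def IsSkewHadamard {G : Type*} [AddCommGroup G] (D : Set G) : Prop :=
  Disjoint D (-D) ∧ (0 : G) ∉ D ∧ D ∪ (-D) ∪ {0} = Set.univ

/-!
Write `ψ(D)` for the sum of a character `ψ` over `D`, and `q = 3 ^ (2 * h + 1)`. If `D` is skew and
`ψ` is nontrivial, then `ψ(D)` has real part `-1 / 2`, and since `ψ` takes values in the cube roots
of unity, `‖ψ(D)‖² = (1 + 3 c²) / 4` with `c` the odd integer `∑ d ∈ D, Tr (b d)`, the traces being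
read in `{-1, 0, 1}`. If `3 ^ h` divides every `c`, then `‖ψ(D)‖² ≥ (1 + q) / 4` for every
nontrivial `ψ`; Parseval forces equality throughout, which is the difference set property.

Skewness holds because `-1` is a nonsquare and `f_a` is an odd permutation. Injectivity comes from
an auxiliary form `N` in `x` and `x ^ α`: it is determined by `f_a(x)`, because
`a² N + N ^ α = -f_a(x)²`, and in turn determines `x`.

For the divisibility, the trace of `b f_a(x²)` is congruent modulo `3 ^ h` to the `3 ^ h`-th power
of a sum of Teichmüller monomials. After expansion and summation over `x` only multinomial
coefficients with `q - 1` dividing the total exponent survive. By Legendre's formula their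
valuation is governed by a sum of base-`3` digits, and the carries in that divisibility bound the
digit sum from below by `2 * h + 1`.
-/

section CharacterSums

open Finset

theorem normSq_sum_addChar {G : Type*} [AddCommGroup G] [Finite G] (D : Finset G)
    (ψ : AddChar G ℂ) :
    (‖∑ d ∈ D, ψ d‖ ^ 2 : ℂ) = ∑ x ∈ D, ∑ y ∈ D, ψ (x - y) := by
  rw [← Complex.mul_conj', map_sum, sum_mul_sum]
  simp only [← AddChar.map_neg_eq_conj, ← AddChar.map_add_eq_mul, sub_eq_add_neg]

variable {G : Type*} [AddCommGroup G] [Fintype G] {D : Finset G}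

theorem sum_normSq_sum_addChar_mul [DecidableEq G] (D : Finset G) (g : G) :
    ∑ ψ : AddChar G ℂ, (‖∑ d ∈ D, ψ d‖ ^ 2 : ℂ) * ψ (-g) =
      Fintype.card G * #{p ∈ D ×ˢ D | p.1 - p.2 = g} := by
  calc ∑ ψ : AddChar G ℂ, (‖∑ d ∈ D, ψ d‖ ^ 2 : ℂ) * ψ (-g)
      = ∑ p ∈ D ×ˢ D, ∑ ψ : AddChar G ℂ, ψ (p.1 - p.2 - g) := by
        rw [sum_comm]
        simp only [normSq_sum_addChar, sum_mul, ← AddChar.map_add_eq_mul, ← sub_eq_add_neg,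
          sum_product]
    _ = ∑ p ∈ D ×ˢ D, if p.1 - p.2 = g then (Fintype.card G : ℂ) else 0 := by
        simp only [AddChar.sum_apply_eq_ite, sub_eq_zero]
    _ = Fintype.card G * #{p ∈ D ×ˢ D | p.1 - p.2 = g} := by
        rw [← sum_filter, sum_const, nsmul_eq_mul, mul_comm]

theorem sum_normSq_sum_addChar (D : Finset G) :
    ∑ ψ : AddChar G ℂ, ‖∑ d ∈ D, ψ d‖ ^ 2 = (Fintype.card G * #D : ℝ) := by
  classical
  have hdiag : #{p ∈ D ×ˢ D | p.1 - p.2 = 0} = #D := by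
    rw [← diag_card D, diag_eq_filter]
    simp only [sub_eq_zero]
  have := sum_normSq_sum_addChar_mul D 0
  simp only [neg_zero, AddChar.map_zero_eq_one, mul_one, hdiag] at this
  exact_mod_cast this

theorem isDiffSet_coe_iff [DecidableEq G] {v k l : ℕ} :
    IsDiffSet (D : Set G) v k l ↔
      Fintype.card G = v ∧ #D = k ∧ ∀ g ≠ 0, #{p ∈ D ×ˢ D | p.1 - p.2 = g} = l := by
  have hset (g : G) : {p : G × G | p.1 ∈ (D : Set G) ∧ p.2 ∈ (D : Set G) ∧ p.1 - p.2 = g} =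
      ({p ∈ D ×ˢ D | p.1 - p.2 = g} : Finset (G × G)) := by
    ext p
    simp [and_assoc]
  simp only [IsDiffSet, hset, Nat.card_eq_fintype_card, SetLike.coe_sort_coe, Fintype.card_coe]

theorem IsDiffSet.of_normSq_sum_addChar {l : ℕ}
    (hl : (#D * (#D - 1) : ℝ) = l * (Fintype.card G - 1))
    (hD : ∀ ψ : AddChar G ℂ, ψ ≠ 0 → ‖∑ d ∈ D, ψ d‖ ^ 2 = (#D - l : ℝ)) :
    IsDiffSet (D : Set G) (Fintype.card G) #D l := by
  classical
  refine isDiffSet_coe_iff.2 ⟨rfl, rfl, fun g hg ↦ ?_⟩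
  have hterm (ψ : AddChar G ℂ) : (‖∑ d ∈ D, ψ d‖ ^ 2 : ℂ) * ψ (-g) =
      (#D - l) * ψ (-g) + if ψ = 0 then (#D ^ 2 - (#D - l) : ℂ) else 0 := by
    split_ifs with hψ
    · simp [hψ]
    · have : (‖∑ d ∈ D, ψ d‖ ^ 2 : ℂ) = #D - l := by exact_mod_cast hD ψ hψ
      rw [this, add_zero]
  have hcount : (Fintype.card G * #{p ∈ D ×ˢ D | p.1 - p.2 = g} : ℂ) = Fintype.card G * l := by
    have hlC : (#D * (#D - 1) : ℂ) = l * (Fintype.card G - 1) := by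
      exact_mod_cast congrArg Complex.ofReal hl
    rw [← sum_normSq_sum_addChar_mul D g, sum_congr rfl fun ψ _ ↦ hterm ψ, sum_add_distrib,
      ← mul_sum, AddChar.sum_apply_eq_ite, if_neg (neg_ne_zero.2 hg), sum_ite_eq' univ,
      if_pos (mem_univ _)]
    linear_combination hlC
  exact_mod_cast mul_left_cancel₀ (Nat.cast_ne_zero.2 Fintype.card_ne_zero) hcount

theorem IsDiffSet.of_le_normSq_sum_addChar {l : ℕ}
    (hl : (#D * (#D - 1) : ℝ) = l * (Fintype.card G - 1))
    (hD : ∀ ψ : AddChar G ℂ, ψ ≠ 0 → (#D - l : ℝ) ≤ ‖∑ d ∈ D, ψ d‖ ^ 2) :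
    IsDiffSet (D : Set G) (Fintype.card G) #D l := by
  classical
  refine .of_normSq_sum_addChar hl fun ψ hψ ↦ ?_
  -- By Parseval, `#D - l` is the mean of `‖ψ(D)‖²` over the nontrivial characters.
  have hexcess : ∑ χ ∈ univ.erase (0 : AddChar G ℂ), (‖∑ d ∈ D, χ d‖ ^ 2 - (#D - l : ℝ)) = 0 := by
    have htotal := sum_normSq_sum_addChar D
    rw [← add_sum_erase univ _ (mem_univ 0)] at htotal
    rw [sum_sub_distrib, sum_const, card_erase_of_mem (mem_univ _), card_univ, AddChar.card_eq,
      nsmul_eq_mul, Nat.cast_sub Fintype.card_pos]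
    simp at htotal ⊢
    linear_combination htotal - hl
  have hnonneg : ∀ χ ∈ univ.erase (0 : AddChar G ℂ),
      0 ≤ ‖∑ d ∈ D, χ d‖ ^ 2 - (#D - l : ℝ) :=
    fun χ hχ ↦ sub_nonneg.2 (hD χ (ne_of_mem_erase hχ))
  exact sub_eq_zero.1
    ((sum_eq_zero_iff_of_nonneg hnonneg).1 hexcess ψ (mem_erase.2 ⟨hψ, mem_univ ψ⟩))

end CharacterSums

section SkewHadamard

open Finset
open scoped Pointwise

theorem IsSkewHadamard.image {G H : Type*} [AddCommGroup G] [AddCommGroup H] {D : Set G}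
    (hD : IsSkewHadamard D) {f : G → H} (hf : f.Bijective) (hodd : f.Odd) :
    IsSkewHadamard (f '' D) := by
  obtain ⟨hdisj, -, hcover⟩ := hD
  have hneg : -(f '' D) = f '' (-D) := by
    rw [← Set.image_neg_eq_neg, ← Set.image_neg_eq_neg, Set.image_image, Set.image_image]
    simp only [hodd _]
  have hne {d : G} (hd : d ∈ D) : f d ≠ 0 := fun h0 ↦ by
    have : -d = d := hf.injective (by rw [hodd, h0, neg_zero])
    exact Set.disjoint_left.1 hdisj hd (by rwa [Set.mem_neg, this])
  have hzero : f 0 = 0 := by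
    obtain ⟨x, hx⟩ := hf.surjective 0
    rcases hcover.ge (Set.mem_univ x) with (hxD | hxD) | rfl
    · exact absurd hx (hne hxD)
    · exact absurd (by rw [hodd, hx, neg_zero]) (hne hxD)
    · exact hx
  refine ⟨?_, ?_, ?_⟩
  · rw [hneg]
    exact (Set.disjoint_image_iff hf.injective).2 hdisj
  · rintro ⟨d, hd, h0⟩
    exact hne hd h0
  · rw [hneg, ← hzero, ← Set.image_singleton, ← Set.image_union, ← Set.image_union, hcover,
      Set.image_univ_of_surjective hf.surjective]

variable {G : Type*} [AddCommGroup G] {D : Finset G}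

theorem IsSkewHadamard.sum_univ [Fintype G] (hD : IsSkewHadamard (D : Set G)) {M : Type*}
    [AddCommMonoid M] (φ : G → M) : ∑ x, φ x = φ 0 + (∑ d ∈ D, φ d + ∑ d ∈ D, φ (-d)) := by
  classical
  obtain ⟨hdisj, hzero, hcover⟩ := hD
  have hneg : ∑ d ∈ D, φ (-d) = ∑ d ∈ -D, φ d := (sum_neg_index D φ).symm
  have hdisj' : Disjoint D (-D) := by
    rw [← disjoint_coe, coe_neg]
    exact hdisj
  have hcover' : insert 0 (D ∪ -D) = univ := by
    rw [← coe_inj, coe_insert, coe_union, coe_neg, coe_univ, ← hcover, Set.union_singleton]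
  rw [hneg, ← sum_union hdisj', ← hcover', sum_insert]
  simpa using hzero

theorem IsSkewHadamard.card_eq [Fintype G] (hD : IsSkewHadamard (D : Set G)) :
    Fintype.card G = 2 * #D + 1 := by
  have := hD.sum_univ fun _ ↦ 1
  simp only [sum_const, smul_eq_mul, mul_one, card_univ] at this
  lia

theorem IsSkewHadamard.re_sum_addChar [Finite G] (hD : IsSkewHadamard (D : Set G)) {ψ : AddChar G ℂ}
    (hψ : ψ ≠ 0) : 2 * (∑ d ∈ D, ψ d).re = -1 := by
  have := Fintype.ofFinite G
  have hsum := congrArg Complex.re (hD.sum_univ ψ)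
  rw [AddChar.sum_eq_zero_iff_ne_zero.2 hψ, AddChar.map_zero_eq_one] at hsum
  simp only [AddChar.map_neg_eq_conj, ← map_sum, Complex.add_re, Complex.conj_re, Complex.zero_re,
    Complex.one_re] at hsum
  linarith

theorem IsSkewHadamard.isDiffSet_of_le_normSq [Fintype G] (hD : IsSkewHadamard (D : Set G)) {k : ℕ}
    (hcard : Fintype.card G = 4 * k + 3)
    (hψ : ∀ ψ : AddChar G ℂ, ψ ≠ 0 → (k + 1 : ℝ) ≤ ‖∑ d ∈ D, ψ d‖ ^ 2) :
    IsDiffSet (D : Set G) (4 * k + 3) (2 * k + 1) k := by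
  have hDcard : #D = 2 * k + 1 := by
    have := hD.card_eq
    lia
  rw [← hcard, ← hDcard]
  refine .of_le_normSq_sum_addChar ?_ fun ψ hψ0 ↦ ?_
  · rw [hcard, hDcard]
    push_cast
    ring
  · rw [hDcard]
    push_cast
    linarith [hψ ψ hψ0]

end SkewHadamard

section CubicCharacters

open Finset

theorem stdAddChar_three_one : ZMod.stdAddChar (1 : ZMod 3) = ⟨-1 / 2, √3 / 2⟩ := by
  have hexp : ZMod.stdAddChar (1 : ZMod 3) =
      Complex.exp ((Real.pi - Real.pi / 3 : ℝ) * Complex.I) := by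
    rw [← Int.cast_one, ZMod.stdAddChar_coe]
    congr 1
    push_cast
    ring
  rw [hexp, Complex.exp_mul_I, ← Complex.ofReal_cos, ← Complex.ofReal_sin, Real.cos_pi_sub,
    Real.sin_pi_sub, Real.cos_pi_div_three, Real.sin_pi_div_three]
  apply Complex.ext <;> simp [neg_div]

theorem zmod_three_cases : ∀ r : ZMod 3, r = 0 ∨ r = 1 ∨ r = -1 := by decide

theorem two_mul_re_stdAddChar_three (r : ZMod 3) :
    2 * (ZMod.stdAddChar r).re = ((if r = 0 then 2 else -1 : ℤ) : ℝ) := by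
  rcases zmod_three_cases r with rfl | rfl | rfl
  · simp
  · norm_num [stdAddChar_three_one]
  · norm_num [AddChar.map_neg_eq_conj, stdAddChar_three_one]

theorem two_mul_im_stdAddChar_three (r : ZMod 3) :
    2 * (ZMod.stdAddChar r).im = √3 * r.valMinAbs := by
  have hval : (1 : ZMod 3).valMinAbs = 1 ∧ (-1 : ZMod 3).valMinAbs = -1 := by decide
  rcases zmod_three_cases r with rfl | rfl | rfl
  · simp
  · norm_num [stdAddChar_three_one, hval.1, mul_div_cancel₀]
  · norm_num [AddChar.map_neg_eq_conj, stdAddChar_three_one, hval.2, mul_div_cancel₀]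

variable {G : Type*} [AddCommGroup G] {D : Finset G} {ℓ : G →+ ZMod 3}

theorem IsSkewHadamard.four_mul_normSq_sum_stdAddChar [Finite G] (hD : IsSkewHadamard (D : Set G))
    (hℓ : ZMod.stdAddChar.compAddMonoidHom ℓ ≠ 0) :
    4 * ‖∑ d ∈ D, ZMod.stdAddChar (ℓ d)‖ ^ 2 = 1 + 3 * (∑ d ∈ D, (ℓ d).valMinAbs : ℤ) ^ 2 := by
  have hre : 2 * (∑ d ∈ D, ZMod.stdAddChar (ℓ d)).re = -1 := hD.re_sum_addChar hℓ
  have him : 2 * (∑ d ∈ D, ZMod.stdAddChar (ℓ d)).im =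
      √3 * (∑ d ∈ D, (ℓ d).valMinAbs : ℤ) := by
    simp only [Complex.im_sum, mul_sum, two_mul_im_stdAddChar_three, Int.cast_sum]
  have hsqrt : √3 ^ 2 = 3 := Real.sq_sqrt (by norm_num)
  rw [← Complex.normSq_eq_norm_sq, Complex.normSq_apply]
  generalize (∑ d ∈ D, ZMod.stdAddChar (ℓ d)) = z at *
  grind

theorem IsSkewHadamard.odd_sum_valMinAbs [Finite G] (hD : IsSkewHadamard (D : Set G))
    (hℓ : ZMod.stdAddChar.compAddMonoidHom ℓ ≠ 0) : Odd (∑ d ∈ D, (ℓ d).valMinAbs) := by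
  have hre : ∑ d ∈ D, (if ℓ d = 0 then 2 else -1 : ℤ) = -1 := by
    have := hD.re_sum_addChar hℓ
    simp only [AddChar.compAddMonoidHom_apply, Complex.re_sum, mul_sum,
      two_mul_re_stdAddChar_three] at this
    exact_mod_cast this
  have hparity : ∀ r : ZMod 3, r.valMinAbs ≡ if r = 0 then 2 else -1 [ZMOD 2] := by decide
  have hsum := Int.ModEq.sum (n := 2) (s := D) fun d _ ↦ hparity (ℓ d)
  rw [hre] at hsum
  exact Int.odd_iff.2 hsum

theorem exists_eq_stdAddChar_trace {p : ℕ} [Fact p.Prime] {F : Type*} [Field F] [Finite F]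
    [Algebra (ZMod p) F] (ψ : AddChar F ℂ) :
    ∃ b : F, ψ = ZMod.stdAddChar.compAddMonoidHom
      ((Algebra.trace (ZMod p) F).toAddMonoidHom.comp (AddMonoidHom.mulLeft b)) := by
  have := Fintype.ofFinite F
  let ψ₀ : AddChar F ℂ :=
    ZMod.stdAddChar.compAddMonoidHom (Algebra.trace (ZMod p) F).toAddMonoidHom
  have hψ₀ : ψ₀ ≠ 1 := by
    obtain ⟨y, hy⟩ := Algebra.trace_surjective (ZMod p) F 1
    intro h
    have hy1 : ZMod.stdAddChar (1 : ZMod p) = 1 := by simpa [ψ₀, hy] using DFunLike.congr_fun h y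
    exact one_ne_zero (ZMod.injective_stdAddChar (hy1.trans (AddChar.map_zero_eq_one _).symm))
  have hbij : Function.Bijective ψ₀.mulShift :=
    (Fintype.bijective_iff_injective_and_card _).2
      ⟨AddChar.to_mulShift_inj_of_isPrimitive (.of_ne_one hψ₀), AddChar.card_eq.symm⟩
  obtain ⟨b, hb⟩ := hbij.surjective ψ
  exact ⟨b, hb.symm⟩

theorem three_pow_two_mul_add_one_mod_four (h : ℕ) : 3 ^ (2 * h + 1) % 4 = 3 := by
  rw [pow_succ, pow_mul, Nat.mul_mod, Nat.pow_mod]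
  norm_num

theorem IsSkewHadamard.isDiffSet_of_pow_dvd_sum_trace {F : Type*} [Field F] [Fintype F]
    [Algebra (ZMod 3) F] {h : ℕ} (hcard : Fintype.card F = 3 ^ (2 * h + 1)) {D : Finset F}
    (hD : IsSkewHadamard (D : Set F))
    (hdvd : ∀ b : F, (3 : ℤ) ^ h ∣ ∑ d ∈ D, (Algebra.trace (ZMod 3) F (b * d)).valMinAbs) :
    IsDiffSet (D : Set F) (3 ^ (2 * h + 1)) ((3 ^ (2 * h + 1) - 1) / 2)
      ((3 ^ (2 * h + 1) - 3) / 4) := by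
  obtain ⟨k, hk⟩ : ∃ k, 3 ^ (2 * h + 1) = 4 * k + 3 := by
    have := three_pow_two_mul_add_one_mod_four h
    exact ⟨3 ^ (2 * h + 1) / 4, by lia⟩
  rw [hk, show (4 * k + 3 - 1) / 2 = 2 * k + 1 by lia, show (4 * k + 3 - 3) / 4 = k by lia]
  refine hD.isDiffSet_of_le_normSq (hcard.trans hk) fun ψ hψ ↦ ?_
  obtain ⟨b, rfl⟩ := exists_eq_stdAddChar_trace (p := 3) ψ
  set ℓ := (Algebra.trace (ZMod 3) F).toAddMonoidHom.comp (AddMonoidHom.mulLeft b)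
  obtain ⟨c, hc⟩ : (3 : ℤ) ^ h ∣ ∑ d ∈ D, (ℓ d).valMinAbs := hdvd b
  have hnorm := hD.four_mul_normSq_sum_stdAddChar hψ
  have hodd := hD.odd_sum_valMinAbs hψ
  rw [hc] at hnorm hodd
  have hcpos : 1 ≤ c ^ 2 := by
    have hc0 : c ≠ 0 := by
      rintro rfl
      simp at hodd
    exact Order.one_le_iff_pos.2 (by positivity)
  have hcsq : (4 * k + 3 : ℤ) ≤ 3 * (3 ^ h * c) ^ 2 := by
    calc (4 * k + 3 : ℤ) = 3 * (3 ^ h) ^ 2 * 1 := by rw [← pow_mul']; exact_mod_cast by lia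
      _ ≤ 3 * (3 ^ h) ^ 2 * c ^ 2 := by gcongr
      _ = 3 * (3 ^ h * c) ^ 2 := by ring
  have hcsq' : (4 * k + 3 : ℝ) ≤ 3 * (3 ^ h * c : ℤ) ^ 2 := by exact_mod_cast hcsq
  simp only [AddChar.compAddMonoidHom_apply]
  linarith

end CubicCharacters

section NonzeroSquares

open Finset

variable {F : Type*} [Field F] [Fintype F]

theorem isSkewHadamard_image_sq (hF : Fintype.card F % 4 = 3) :
    IsSkewHadamard ((· ^ 2) '' {0}ᶜ : Set F) := by
  classical
  have hneg : ¬IsSquare (-1 : F) := by simp [FiniteField.isSquare_neg_one_iff, hF]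
  refine ⟨?_, ?_, ?_⟩
  · rw [Set.disjoint_left]
    rintro _ ⟨x, hx, rfl⟩ ⟨y, -, hy⟩
    refine hneg ⟨y / x, ?_⟩
    have hx' : x ≠ 0 := hx
    field_simp
    linear_combination -hy
  · rintro ⟨x, hx, hx0⟩
    exact hx (pow_eq_zero_iff two_ne_zero |>.1 hx0)
  · refine Set.eq_univ_of_forall fun x ↦ ?_
    rcases eq_or_ne x 0 with rfl | hx
    · exact Or.inr rfl
    have hsq {y : F} (hy : y ≠ 0) (h : IsSquare y) : y ∈ ((· ^ 2) '' {0}ᶜ : Set F) := by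
      obtain ⟨z, rfl⟩ := h
      exact ⟨z, left_ne_zero_of_mul hy, sq z⟩
    by_cases h : IsSquare x
    · exact Or.inl (Or.inl (hsq hx h))
    · refine Or.inl (Or.inr (hsq (neg_ne_zero.2 hx) ?_))
      rw [← quadraticChar_one_iff_isSquare (neg_ne_zero.2 hx), ← neg_one_mul, map_mul,
        quadraticChar_neg_one_iff_not_isSquare.2 hneg, quadraticChar_neg_one_iff_not_isSquare.2 h]
      rfl

theorem sum_sq_eq_two_nsmul [DecidableEq F] (hF : ringChar F ≠ 2) {M : Type*} [AddCommMonoid M]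
    (φ : F → M) : ∑ x ∈ {0}ᶜ, φ (x ^ 2) = 2 • ∑ w ∈ ({0}ᶜ : Finset F).image (· ^ 2), φ w := by
  rw [sum_comp φ (· ^ 2), smul_sum]
  refine sum_congr rfl fun w hw ↦ ?_
  obtain ⟨x, hx, rfl⟩ := mem_image.1 hw
  have hx0 : x ≠ 0 := by simpa using hx
  have hfiber : ({y ∈ {0}ᶜ | y ^ 2 = x ^ 2} : Finset F) = {x, -x} := by
    ext y
    simp only [mem_filter, mem_compl, mem_singleton, sq_eq_sq_iff_eq_or_eq_neg, mem_insert]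
    exact ⟨And.right, fun h ↦ ⟨by rcases h with rfl | rfl <;> simpa, h⟩⟩
  rw [hfiber, card_pair (Ne.symm (mt (Ring.eq_self_iff_eq_zero_of_char_ne_two hF).1 hx0))]

end NonzeroSquares

section ReeTitsPolynomial

/-- The Ree–Tits polynomial `f_a`, written for an endomorphism `σ` in place of `x ↦ x ^ α`. -/
def reeTits {F : Type*} [CommRing F] (σ : F →+* F) (a x : F) : F :=
  x ^ 3 * σ x ^ 2 + σ a * σ x - a ^ 2 * x

/-- The auxiliary form `N` which, together with `reeTits σ a x`, determines `x` rationally. -/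
def reeTitsResolvent {F : Type*} [CommRing F] (σ : F →+* F) (a x : F) : F :=
  -x ^ 4 * σ x ^ 2 + a * x ^ 3 * σ x - σ a * x * σ x - a ^ 2 * x ^ 2

theorem reeTits_neg {F : Type*} [CommRing F] (σ : F →+* F) (a x : F) :
    reeTits σ a (-x) = -reeTits σ a x := by
  simp only [reeTits, map_neg]
  ring

theorem map_reeTits {F : Type*} [CommRing F] {σ : F →+* F} (hσ : ∀ x, σ (σ x) = x ^ 3) (a x : F) :
    σ (reeTits σ a x) = σ x ^ 3 * x ^ 6 + a ^ 3 * x ^ 3 - σ a ^ 2 * σ x := by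
  simp only [reeTits, map_sub, map_add, map_mul, map_pow, hσ]
  ring

variable {F : Type*} [Field F] [CharP F 3] {σ : F →+* F}

theorem reeTitsResolvent_add_map (hσ : ∀ x, σ (σ x) = x ^ 3) (a x : F) :
    a ^ 2 * reeTitsResolvent σ a x + σ (reeTitsResolvent σ a x) = -reeTits σ a x ^ 2 := by
  have h3 : (3 : F) = 0 := CharP.cast_eq_zero F 3
  simp only [reeTitsResolvent, reeTits, map_sub, map_add, map_mul, map_pow, map_neg, hσ]
  linear_combination
    (-a ^ 2 * x ^ 4 * σ x ^ 2 + σ a * x ^ 3 * σ x ^ 3 - a ^ 2 * σ a * x * σ x) * h3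

theorem reeTitsResolvent_mul_eq (hσ : ∀ x, σ (σ x) = x ^ 3) (a x : F) :
    (a ^ 2 * reeTitsResolvent σ a x + reeTits σ a x ^ 2 - a ^ 3 * σ a) *
      (a ^ 2 * x + reeTits σ a x) = reeTits σ a x ^ 3 + a ^ 3 * σ (reeTits σ a x) := by
  have : (3 : F) = 0 := CharP.cast_eq_zero F 3
  rw [map_reeTits hσ]
  simp only [reeTitsResolvent, reeTits]
  generalize σ x = y
  generalize σ a = A
  grind

theorem eq_zero_of_map_eq_neg_sq_mul (hσ : ∀ x, σ (σ x) = x ^ 3) {a d : F} (ha : a ≠ 0)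
    (hd : σ d = -a ^ 2 * d) : d = 0 := by
  have : (3 : F) = 0 := CharP.cast_eq_zero F 3
  by_contra hne
  have hcube : d ^ 3 = a ^ 2 * σ a ^ 2 * d := by
    rw [← hσ, hd]
    simp only [map_mul, map_neg, map_pow, hd]
    ring
  have hsq : d ^ 2 = (a * σ a) ^ 2 := mul_left_cancel₀ hne (by linear_combination hcube)
  have hsigma : a ^ 2 * d = 0 := by
    rcases sq_eq_sq_iff_eq_or_eq_neg.1 hsq with h | h <;>
    · have hσd := congrArg σ h
      simp only [map_neg, map_mul, hσ, hd] at hσd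
      grind
  exact mul_ne_zero (pow_ne_zero 2 ha) hne hsigma

theorem reeTitsResolvent_add_sq_sub_ne_zero (hσ : ∀ x, σ (σ x) = x ^ 3) {a : F} (ha : a ≠ 0)
    (x : F) : a ^ 2 * reeTitsResolvent σ a x + reeTits σ a x ^ 2 - a ^ 3 * σ a ≠ 0 := by
  intro hK
  have hm := reeTitsResolvent_mul_eq hσ a x
  have hN := reeTitsResolvent_add_map hσ a x
  rw [hK, zero_mul] at hm
  generalize reeTits σ a x = c at *
  generalize reeTitsResolvent σ a x = N at *
  have hA : a ^ 3 * σ a ≠ 0 := mul_ne_zero (pow_ne_zero 3 ha) ((map_ne_zero σ).2 ha)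
  have hσc : σ c = -σ a * c := by
    have hσm := congrArg σ hm
    simp only [map_zero, map_add, map_mul, map_pow, hσ] at hσm
    refine frobenius_inj F 3 ?_
    simp only [frobenius_def]
    linear_combination -hσm
  have hc : c = 0 := by
    by_contra hc
    have hcsq : c ^ 2 = a ^ 3 * σ a :=
      mul_left_cancel₀ hc (by linear_combination -hm - a ^ 3 * hσc)
    have hN0 : N = 0 := by
      refine (mul_eq_zero.1 (?_ : a ^ 2 * N = 0)).resolve_left (pow_ne_zero 2 ha)
      linear_combination hK - hcsq
    rw [hN0, map_zero] at hN
    exact pow_ne_zero 2 hc (by linear_combination hN)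
  have hN0 : N = 0 := eq_zero_of_map_eq_neg_sq_mul hσ ha (by rw [hc] at hN; linear_combination hN)
  exact hA (by rw [hc, hN0] at hK; linear_combination -hK)

theorem reeTits_injective (hσ : ∀ x, σ (σ x) = x ^ 3) {a : F} (ha : a ≠ 0) :
    Function.Injective (reeTits σ a) := by
  intro x y hxy
  have hN : reeTitsResolvent σ a x = reeTitsResolvent σ a y := by
    refine sub_eq_zero.1 (eq_zero_of_map_eq_neg_sq_mul hσ ha ?_)
    have hx := reeTitsResolvent_add_map hσ a x
    have hy := reeTitsResolvent_add_map hσ a y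
    rw [map_sub]
    rw [hxy] at hx
    linear_combination hx - hy
  have hx := reeTitsResolvent_mul_eq hσ a x
  rw [hxy, hN, ← reeTitsResolvent_mul_eq hσ a y] at hx
  have hsum := mul_left_cancel₀ (reeTitsResolvent_add_sq_sub_ne_zero hσ ha y) hx
  exact mul_left_cancel₀ (pow_ne_zero 2 ha) (add_right_cancel hsum)

end ReeTitsPolynomial

section CyclicDigits

open Finset

variable {b n : ℕ}

theorem natCast_pow_eq_one (hb : 0 < b) : (b : ZMod (b ^ n - 1)) ^ n = 1 := by
  have := ZMod.natCast_self (b ^ n - 1)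
  rwa [Nat.cast_sub (Nat.one_le_pow _ _ hb), Nat.cast_pow, Nat.cast_one, sub_eq_zero] at this

theorem natCast_pow_val_natCast (hb : 0 < b) (k : ℕ) :
    (b : ZMod (b ^ n - 1)) ^ (k : ZMod n).val = b ^ k := by
  rw [ZMod.val_natCast, ← pow_eq_pow_mod k (natCast_pow_eq_one hb)]

theorem sum_zmod_val {n : ℕ} [NeZero n] {M : Type*} [AddCommMonoid M] (f : ℕ → M) :
    ∑ t : ZMod n, f t.val = ∑ j ∈ range n, f j :=
  sum_nbij' ZMod.val Nat.cast (fun t _ ↦ mem_range.2 t.val_lt) (fun _ _ ↦ mem_univ _)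
    (fun t _ ↦ t.natCast_zmod_val) (fun _ hj ↦ ZMod.val_cast_of_lt (mem_range.1 hj)) fun _ _ ↦ rfl

/-- The residue modulo `b ^ n - 1` of the number with base-`b` digits `A`. Positions are cyclic
because `b ^ n ≡ 1`, and the digits are not required to be smaller than `b`. -/
def cyclicEval (b n : ℕ) [NeZero n] : (ZMod n → ℕ) →+ ZMod (b ^ n - 1) where
  toFun A := ∑ t, A t * (b : ZMod (b ^ n - 1)) ^ t.val
  map_zero' := by simp
  map_add' A B := by simp [add_mul, sum_add_distrib]

variable [NeZero n]

theorem cyclicEval_apply (A : ZMod n → ℕ) :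
    cyclicEval b n A = ∑ t, A t * (b : ZMod (b ^ n - 1)) ^ t.val := rfl

theorem cyclicEval_single_zero (m : ℕ) : cyclicEval b n (Pi.single 0 m) = m := by
  rw [cyclicEval_apply, sum_eq_single 0]
  · simp
  · intro t _ ht
    simp [ht]
  · simp

theorem natCast_pow_val_add (hb : 0 < b) (s t : ZMod n) :
    (b : ZMod (b ^ n - 1)) ^ (s + t).val = b ^ s.val * b ^ t.val := by
  rw [← pow_add, ZMod.val_add, ← pow_eq_pow_mod _ (natCast_pow_eq_one hb)]

theorem cyclicEval_shift (hb : 0 < b) (A : ZMod n → ℕ) (k : ZMod n) :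
    cyclicEval b n (fun t ↦ A (t - k)) = b ^ k.val * cyclicEval b n A := by
  rw [cyclicEval_apply, cyclicEval_apply, mul_sum]
  refine Fintype.sum_equiv (Equiv.subRight k) _ _ fun t ↦ ?_
  rw [Equiv.subRight_apply, mul_left_comm, ← natCast_pow_val_add hb, add_sub_cancel]

theorem exists_cyclicEval_eq_natCast (hb : 1 < b) (u : ℕ) :
    ∃ A : ZMod n → ℕ, ∑ t, A t = (Nat.digits b u).sum ∧ cyclicEval b n A = u := by
  induction u using Nat.strong_induction_on with
  | _ u ih =>
    rcases Nat.eq_zero_or_pos u with rfl | hu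
    · exact ⟨0, by simp, by simp⟩
    obtain ⟨A, hsum, heval⟩ := ih (u / b) (Nat.div_lt_self hu hb)
    refine ⟨Pi.single 0 (u % b) + fun t ↦ A (t - ((1 : ℕ) : ZMod n)), ?_, ?_⟩
    · simp only [Pi.add_apply, sum_add_distrib, sum_pi_single', mem_univ, if_true]
      rw [Nat.digits_def' hb hu, List.sum_cons, ← hsum,
        Fintype.sum_equiv (Equiv.subRight ((1 : ℕ) : ZMod n)) (fun t ↦ A (t - _)) A fun _ ↦ rfl]
    · rw [map_add, cyclicEval_single_zero, cyclicEval_shift hb.pos, heval,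
        natCast_pow_val_natCast hb.pos, pow_one]
      exact_mod_cast congrArg Nat.cast (Nat.mod_add_div u b)

theorem exists_cyclicEval_eq_sum (hb : 1 < b) (m : ZMod n → ℕ) :
    ∃ A : ZMod n → ℕ, ∑ t, A t = ∑ s, (Nat.digits b (m s)).sum ∧
      cyclicEval b n A = ∑ s, b ^ s.val * (m s : ZMod (b ^ n - 1)) := by
  choose A hsum heval using fun s ↦ exists_cyclicEval_eq_natCast (n := n) hb (m s)
  refine ⟨∑ s, fun t ↦ A s (t - s), ?_, ?_⟩
  · simp only [Finset.sum_apply, ← hsum]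
    rw [sum_comm]
    exact sum_congr rfl fun s _ ↦ Fintype.sum_equiv (Equiv.subRight s) _ _ fun _ ↦ rfl
  · simp_rw [map_sum, cyclicEval_shift hb.pos, heval]

theorem exists_carry (hb : 1 < b) {w : ZMod n → ℕ} (hw : cyclicEval b n w = 0) (hw0 : w ≠ 0) :
    ∃ C : ZMod n → ℕ, (∀ t, 0 < C t) ∧ ∀ t, b * C t = w t + C (t - 1) := by
  obtain ⟨M, hM⟩ : ∃ M, b ^ n = M + 1 := Nat.exists_eq_succ_of_ne_zero (by positivity)
  have hMpos : 0 < M := by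
    have := Nat.one_lt_pow (NeZero.ne n) hb
    lia
  -- The integers written by the cyclic shifts of `w` are divisible by `M`; `C` is their quotient.
  let Z (t : ZMod n) : ℕ := ∑ v ∈ range n, w (t + 1 + v) * b ^ v
  have hZrec (t : ZMod n) : b * Z t + w t = Z (t - 1) + w t * b ^ n := by
    have hsucc := sum_range_succ (fun v ↦ w (t + v) * b ^ v) n
    rw [sum_range_succ'] at hsucc
    simp only [Nat.cast_zero, add_zero, pow_zero, mul_one, CharP.cast_eq_zero] at hsucc
    simp only [Z, mul_sum, sub_add_cancel, ← hsucc]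
    congr 1
    refine sum_congr rfl fun v _ ↦ ?_
    rw [Nat.cast_succ, pow_succ, add_right_comm, ← add_assoc]
    ring
  have hZdvd (t : ZMod n) : M ∣ Z t := by
    have hshift := cyclicEval_shift hb.pos w (-(t + 1))
    rw [hw, mul_zero, cyclicEval_apply, hM, Nat.add_sub_cancel] at hshift
    rw [← ZMod.natCast_eq_zero_iff, ← hshift]
    simp only [Z, Nat.cast_sum, Nat.cast_mul, Nat.cast_pow, ← sum_zmod_val, ZMod.natCast_zmod_val,
      sub_neg_eq_add, add_comm]
  choose C hC using hZdvd
  refine ⟨C, fun t ↦ Nat.pos_of_ne_zero fun hCt ↦ hw0 (funext fun s ↦ ?_), fun t ↦ ?_⟩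
  · have hZ0 : Z t = 0 := by rw [hC, hCt, mul_zero]
    have hterm := sum_eq_zero_iff.1 hZ0 (s - (t + 1)).val (mem_range.2 (ZMod.val_lt _))
    rw [ZMod.natCast_zmod_val, add_sub_cancel] at hterm
    exact (mul_eq_zero.1 hterm).resolve_right (by positivity)
  · have := hZrec t
    rw [hC, hC, hM] at this
    refine Nat.eq_of_mul_eq_mul_left hMpos ?_
    linarith

end CyclicDigits

section PowerSums

open Finset
open scoped Nat

theorem sub_one_mul_padicValNat_multinomial {ι : Type*} (p : ℕ) [Fact p.Prime] (s : Finset ι)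
    (m : ι → ℕ) :
    (p - 1) * padicValNat p (Nat.multinomial s m) + (Nat.digits p (∑ i ∈ s, m i)).sum =
      ∑ i ∈ s, (Nat.digits p (m i)).sum := by
  have legendre (k : ℕ) : (p - 1) * padicValNat p k ! + (Nat.digits p k).sum = k := by
    rw [sub_one_mul_padicValNat_factorial, Nat.sub_add_cancel (Nat.digit_sum_le p k)]
  have hfac : ∏ i ∈ s, (m i)! ≠ 0 := prod_ne_zero_iff.2 fun i _ ↦ Nat.factorial_ne_zero _
  have hval : padicValNat p (∏ i ∈ s, (m i)!) = ∑ i ∈ s, padicValNat p (m i)! := by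
    simp only [← Nat.factorization_def _ (Fact.out (p := p.Prime))]
    rw [Nat.factorization_prod fun i _ ↦ Nat.factorial_ne_zero _, Finsupp.finsetSum_apply]
  have hspec := congrArg (padicValNat p) (Nat.multinomial_spec s m)
  rw [padicValNat.mul hfac (Nat.multinomial_pos s m).ne', hval] at hspec
  have hsum : (p - 1) * ∑ i ∈ s, padicValNat p (m i)! + ∑ i ∈ s, (Nat.digits p (m i)).sum =
      ∑ i ∈ s, m i := by
    rw [mul_sum, ← sum_add_distrib, sum_congr rfl fun i _ ↦ legendre (m i)]
  have := legendre (∑ i ∈ s, m i)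
  rw [← hspec, mul_add] at this
  lia

variable {F R : Type*} [Field F] [Fintype F] [CommRing R]

theorem sum_pow_monoidHom_eq_zero [IsDomain R] {χ : F →* R} (hχ : Function.Injective χ) {k : ℕ}
    (hk : ¬ Fintype.card F - 1 ∣ k) : ∑ x, χ x ^ k = 0 := by
  classical
  obtain ⟨g, hg⟩ := IsCyclic.exists_generator (α := Fˣ)
  have hne : χ g ^ k ≠ 1 := by
    rw [← map_pow, ← map_one χ, hχ.ne_iff, ← Units.val_pow_eq_pow_val, Ne, Units.val_eq_one,
      ← orderOf_dvd_iff_pow_eq_one, orderOf_eq_card_of_forall_mem_zpowers hg,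
      Nat.card_eq_fintype_card, Fintype.card_units]
    exact hk
  have hinv : ∑ x, χ x ^ k = χ g ^ k * ∑ x, χ x ^ k := by
    rw [mul_sum, ← Equiv.sum_comp (Equiv.mulLeft₀ (g : F) g.ne_zero)]
    simp only [Equiv.mulLeft₀_apply, map_mul, mul_pow]
  by_contra hsum
  exact hne (mul_right_cancel₀ hsum (by rw [← hinv, one_mul]))

theorem natCast_dvd_sum_pow_sum_of_dvd_multinomial [IsDomain R] {χ : F →* R}
    (hχ : Function.Injective χ) {κ : Type*} [Fintype κ] (c : κ → R) (e : κ → ℕ) {a M : ℕ}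
    (ha : ∀ m : κ → ℕ, ∑ k, m k = M → Fintype.card F - 1 ∣ ∑ k, e k * m k →
      a ∣ Nat.multinomial univ m) :
    (a : R) ∣ ∑ x, (∑ k, c k * χ x ^ e k) ^ M := by
  classical
  have hprod (m : κ → ℕ) (x : F) :
      ∏ k, (c k * χ x ^ e k) ^ m k = (∏ k, c k ^ m k) * χ x ^ ∑ k, e k * m k := by
    simp only [mul_pow, prod_mul_distrib, ← pow_mul, prod_pow_eq_pow_sum]
  simp only [sum_pow_eq_sum_piAntidiag, hprod]
  rw [sum_comm]
  refine dvd_sum fun m hm ↦ ?_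
  rw [← mul_sum, ← mul_sum]
  by_cases hdvd : Fintype.card F - 1 ∣ ∑ k, e k * m k
  · exact (Nat.cast_dvd_cast (ha m (mem_piAntidiag.1 hm).1 hdvd)).mul_right _
  · simp [sum_pow_monoidHom_eq_zero hχ hdvd]

end PowerSums

section TraceSums

open Finset

variable {p : ℕ} [Fact p.Prime] {F : Type*} [Field F] [CharP F p]

theorem pow_dvd_of_pow_dvd_intCast_wittVector {j : ℕ} {c : ℤ}
    (hc : (p : WittVector p F) ^ j ∣ c) : (p : ℤ) ^ j ∣ c := by
  induction j generalizing c with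
  | zero => simp
  | succ j ih =>
    have hF : (c : F) = 0 := by
      simpa using map_dvd WittVector.constantCoeff ((dvd_pow_self _ j.succ_ne_zero).trans hc)
    obtain ⟨d, rfl⟩ := (CharP.intCast_eq_zero_iff F p c).1 hF
    rw [Int.cast_mul, Int.cast_natCast, pow_succ'] at hc
    rw [pow_succ']
    exact mul_dvd_mul_left _ (ih ((mul_dvd_mul_iff_left (WittVector.p_nonzero p F)).1 hc))

theorem natCast_dvd_sub_wittVector [PerfectRing F p] {u v : WittVector p F}
    (huv : WittVector.constantCoeff u = WittVector.constantCoeff v) :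
    (p : WittVector p F) ∣ u - v := by
  rw [← Ideal.mem_span_singleton, WittVector.mem_span_p_iff_coeff_zero_eq_zero]
  exact (map_sub WittVector.constantCoeff u v).trans (sub_eq_zero.2 huv)

variable {n : ℕ} [NeZero n] {ι : Type*} [Fintype ι]

theorem pow_dvd_multinomial_of_cyclicEval {r : ℕ} {e : ι → ℕ}
    (he : ∀ A : ι → ZMod n → ℕ, ∑ i, e i * cyclicEval p n (A i) = 0 →
      ∑ i, ∑ t, A i t ≡ 1 [MOD p - 1] → (p - 1) * r < ∑ i, ∑ t, A i t)
    {m : ι × ZMod n → ℕ} (hm : ∑ k, m k = p ^ r)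
    (hdvd : p ^ n - 1 ∣ ∑ k, e k.1 * p ^ k.2.val * m k) :
    p ^ r ∣ Nat.multinomial univ m := by
  have hp := Fact.out (p := p.Prime)
  have hval := sub_one_mul_padicValNat_multinomial p univ m
  have hdigits : (Nat.digits p (p ^ r)).sum = 1 := by
    have := Nat.digits_base_pow_mul (k := r) hp.one_lt one_pos
    rw [mul_one] at this
    simp [this, Nat.digits_of_lt p 1 one_ne_zero hp.one_lt]
  rw [hm, hdigits, Fintype.sum_prod_type] at hval
  choose A hsum heval using fun i ↦ exists_cyclicEval_eq_sum hp.one_lt fun t ↦ m (i, t)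
  simp only [← hsum] at hval
  have hlt := he A ?_ (hval ▸ by simp [Nat.ModEq])
  · rw [padicValNat_dvd_iff_le (Nat.multinomial_pos _ _).ne']
    rw [← hval, Nat.lt_add_one_iff] at hlt
    exact le_of_mul_le_mul_left hlt (Nat.sub_pos_of_lt hp.one_lt)
  · rw [← (ZMod.natCast_eq_zero_iff _ _).2 hdvd]
    simp [heval, Fintype.sum_prod_type, mul_sum, mul_assoc]

variable [Fintype F] [Algebra (ZMod p) F]

theorem algebraMap_trace_sum_eq (hcard : Fintype.card F = p ^ n) (c : ι → F) (e : ι → ℕ) (x : F) :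
    algebraMap (ZMod p) F (Algebra.trace (ZMod p) F (∑ i, c i * x ^ e i)) =
      ∑ k : ι × ZMod n, c k.1 ^ p ^ k.2.val * x ^ (e k.1 * p ^ k.2.val) := by
  have hrank : Module.finrank (ZMod p) F = n := by
    have := Module.card_eq_pow_finrank (K := ZMod p) (V := F)
    rw [hcard, ZMod.card] at this
    exact (Nat.pow_right_injective (Fact.out (p := p.Prime)).two_le this).symm
  rw [FiniteField.algebraMap_trace_eq_sum_pow, hrank, Nat.card_zmod, ← sum_zmod_val,
    Fintype.sum_prod_type_right]
  refine sum_congr rfl fun t _ ↦ ?_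
  simp only [sum_pow_char_pow, mul_pow, ← pow_mul]

/- Modulo `p ^ r`, a `(p - 1)`-st root of unity or `0` is the `p ^ r`-th power of anything congruent
to it modulo `p`; expanding the power leaves multinomial coefficients whose valuations are digit
sums. -/
theorem pow_dvd_sum_of_pow_eq_self (hcard : Fintype.card F = p ^ n) {r : ℕ} {e : ι → ℕ}
    (he : ∀ A : ι → ZMod n → ℕ, ∑ i, e i * cyclicEval p n (A i) = 0 →
      ∑ i, ∑ t, A i t ≡ 1 [MOD p - 1] → (p - 1) * r < ∑ i, ∑ t, A i t)
    (c : ι → F) {τ : F → WittVector p F} (hτ : ∀ x, τ x ^ p = τ x)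
    (hτ₀ : ∀ x, WittVector.constantCoeff (τ x) =
      algebraMap (ZMod p) F (Algebra.trace (ZMod p) F (∑ i, c i * x ^ e i))) :
    (p : WittVector p F) ^ r ∣ ∑ x, τ x := by
  let T := WittVector.teichmuller p (R := F)
  have hT (x : F) : WittVector.constantCoeff (T x) = x := WittVector.teichmuller_coeff_zero p x
  let U (x : F) : WittVector p F :=
    ∑ k : ι × ZMod n, T (c k.1) ^ p ^ k.2.val * T x ^ (e k.1 * p ^ k.2.val)
  have hU (x : F) : WittVector.constantCoeff (τ x) = WittVector.constantCoeff (U x) := by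
    rw [hτ₀, algebraMap_trace_sum_eq hcard]
    simp only [U, map_sum, map_mul, map_pow, hT]
  have hτpow (x : F) : τ x ^ p ^ r = τ x := by
    rw [← congrFun (pow_iterate p r) (τ x), Function.iterate_fixed (hτ x)]
  have hcongr (x : F) : (p : WittVector p F) ^ r ∣ τ x - U x ^ p ^ r := by
    have := dvd_sub_pow_of_dvd_sub (natCast_dvd_sub_wittVector (hU x)) r
    rw [hτpow] at this
    exact (pow_dvd_pow _ r.le_succ).trans this
  have hsum : (p : WittVector p F) ^ r ∣ ∑ x, U x ^ p ^ r := by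
    have := natCast_dvd_sum_pow_sum_of_dvd_multinomial (Function.LeftInverse.injective hT)
      (fun k : ι × ZMod n ↦ T (c k.1) ^ p ^ k.2.val) (fun k ↦ e k.1 * p ^ k.2.val)
      (a := p ^ r) (M := p ^ r) fun m hm hdvd ↦
        pow_dvd_multinomial_of_cyclicEval he hm (hcard ▸ hdvd)
    exact_mod_cast this
  rw [← sub_add_cancel (∑ x, τ x) (∑ x, U x ^ p ^ r), ← sum_sub_distrib]
  exact dvd_add (dvd_sum fun x _ ↦ hcongr x) hsum

end TraceSums

open Finset in
theorem pow_dvd_sum_valMinAbs_trace {F ι : Type*} [Field F] [Fintype F] [Algebra (ZMod 3) F]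
    [Fintype ι] {n : ℕ} [NeZero n] (hcard : Fintype.card F = 3 ^ n) {r : ℕ} {e : ι → ℕ}
    (he : ∀ A : ι → ZMod n → ℕ, ∑ i, e i * cyclicEval 3 n (A i) = 0 →
      Odd (∑ i, ∑ t, A i t) → 2 * r < ∑ i, ∑ t, A i t) (c : ι → F) :
    (3 : ℤ) ^ r ∣ ∑ x, (Algebra.trace (ZMod 3) F (∑ i, c i * x ^ e i)).valMinAbs := by
  have := charP_of_injective_algebraMap' (ZMod 3) (A := F) 3
  let tr (x : F) : ZMod 3 := Algebra.trace (ZMod 3) F (∑ i, c i * x ^ e i)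
  have hcube (u : ZMod 3) : u.valMinAbs ^ 3 = u.valMinAbs := by revert u; decide
  have := pow_dvd_sum_of_pow_eq_self (p := 3) hcard (r := r)
    (fun A hA hodd ↦ he A hA (Nat.odd_iff.2 hodd)) c (τ := fun x ↦ ((tr x).valMinAbs : ℤ))
    (fun x ↦ by rw [← Int.cast_pow, hcube])
    fun x ↦ by rw [map_intCast, ← map_intCast (algebraMap (ZMod 3) F), ZMod.coe_valMinAbs]
  exact pow_dvd_of_pow_dvd_intCast_wittVector (F := F) (by exact_mod_cast this)

section CarryInequality

open Finset

theorem sum_sub_right {G M : Type*} [AddGroup G] [Fintype G] [AddCommMonoid M] (f : G → M)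
    (k : G) : ∑ t, f (t - k) = ∑ t, f t :=
  (Equiv.subRight k).sum_comp f

/- The plain potential `-(r + s) / 3`, where `s t = r t - e t + r (t - δ)`, increases from `t - δ`
to `t` by at most `e t + (1 - r t) / 3`. This exceeds `e t` only if `r t = 0`, and rounding, with
the value `s t = 1` adjusted, removes the excess. -/
theorem sum_nonneg_of_abs_le_of_shift_le {G : Type*} [AddGroup G] [Fintype G] (δ : G)
    {e r : G → ℤ} (her : ∀ t, |e t| ≤ r t)
    (hle : ∀ t, r (t - δ) - e (t - δ) + r (t - δ - δ) ≤ r t + 2 * e t + 1) : 0 ≤ ∑ t, e t := by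
  let s (t : G) : ℤ := r t - e t + r (t - δ)
  let φ (t : G) : ℤ := -((r t + if s t = 1 then 0 else s t) / 3)
  have hφ (t : G) : φ t - φ (t - δ) ≤ e t := by
    have := abs_le.1 (her t)
    have := abs_le.1 (her (t - δ))
    have := abs_le.1 (her (t - δ - δ))
    have := hle t
    simp only [φ, s]
    split_ifs <;> lia
  calc
    0 = ∑ t, (φ t - φ (t - δ)) := by rw [sum_sub_distrib, sum_sub_right, sub_self]
    _ ≤ ∑ t, e t := sum_le_sum fun t _ ↦ hφ t

variable {n : ℕ} [NeZero n] {δ : ZMod n} {A B C : ZMod n → ℕ}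

theorem sum_sub_eq_of_carry
    (hcarry : ∀ t, 3 * C t = A (t - δ) + 2 * A (t - 1) + A (t - 1 - δ) + 2 * B t + C (t - 1)) :
    ∑ t, ((C t : ℤ) - A (t - δ)) = ∑ t, (A t : ℤ) + ∑ t, (B t : ℤ) := by
  have h := sum_congr rfl fun t (_ : t ∈ univ) ↦ congrArg (Nat.cast (R := ℤ)) (hcarry t)
  push_cast at h
  simp only [sum_add_distrib, ← mul_sum, sum_sub_right fun t ↦ (A t : ℤ),
    sum_sub_right fun t ↦ (C t : ℤ), sum_sub_right fun t ↦ (A (t - δ) : ℤ)] at h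
  rw [sum_sub_distrib, sum_sub_right fun t ↦ (A t : ℤ)]
  linarith

theorem odd_sub_of_carry
    (hcarry : ∀ t, 3 * C t = A (t - δ) + 2 * A (t - 1) + A (t - 1 - δ) + 2 * B t + C (t - 1))
    (hodd : Odd (∑ t, A t + ∑ t, B t)) (t : ZMod n) : Odd ((C t : ℤ) - A (t - δ)) := by
  let odd (t : ZMod n) : Prop := Odd ((C t : ℤ) - A (t - δ))
  have hper : Function.Periodic odd 1 := fun t ↦ by
    have := hcarry (t + 1)
    rw [add_sub_cancel_right] at this
    simp only [odd, Int.odd_iff]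
    lia
  have hconst (u : ZMod n) : odd u = odd 0 := by simpa using hper.nat_mul_eq u.val
  by_contra hne
  have heven : Even (∑ u, ((C u : ℤ) - A (u - δ))) :=
    even_sum _ fun u _ ↦ Int.not_odd_iff_even.1 <| ((hconst u).trans (hconst t).symm).mp.mt hne
  rw [sum_sub_eq_of_carry hcarry, ← Int.not_odd_iff_even] at heven
  exact heven (by exact_mod_cast hodd)

theorem le_sum_of_carry (hδ : 2 * δ = 1) (hC : ∀ t, 0 < C t)
    (hcarry : ∀ t, 3 * C t = A (t - δ) + 2 * A (t - 1) + A (t - 1 - δ) + 2 * B t + C (t - 1))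
    (hodd : Odd (∑ t, A t + ∑ t, B t)) : n ≤ ∑ t, A t + ∑ t, B t := by
  choose e he using odd_sub_of_carry hcarry hodd
  have hnonneg : 0 ≤ ∑ t, e t := by
    have hδδ (t : ZMod n) : t - δ - δ = t - 1 := by rw [sub_sub, ← two_mul, hδ]
    refine sum_nonneg_of_abs_le_of_shift_le δ (r := fun t ↦ C t - 1 - e t) (fun t ↦ ?_) fun t ↦ ?_
    · have := he t
      have := hC t
      rw [abs_le]
      lia
    · have h₀ := he t
      have h₁ := he (t - δ)
      have h₂ := he (t - 1)
      rw [hδδ] at h₁ ⊢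
      have := hcarry t
      lia
  zify
  rw [← sum_sub_eq_of_carry hcarry, sum_congr rfl fun t _ ↦ he t, sum_add_distrib, ← mul_sum]
  simpa using hnonneg

theorem cyclicEval_carry_source (k : ℕ) (A B C : ZMod n → ℕ) :
    cyclicEval 3 n (fun t ↦ A (t - k) + 2 * A (t - 1) + A (t - 1 - k) + 2 * (B (t - k) + C t)) =
      (4 * 3 ^ k + 6) * cyclicEval 3 n A + 2 * 3 ^ k * cyclicEval 3 n B + 2 * cyclicEval 3 n C := by
  have hshift (k : ℕ) (f : ZMod n → ℕ) :
      cyclicEval 3 n (fun t ↦ f (t - k)) = 3 ^ k * cyclicEval 3 n f := by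
    have := cyclicEval_shift three_pos f k
    rwa [natCast_pow_val_natCast three_pos] at this
  have hshift₁ (f : ZMod n → ℕ) : cyclicEval 3 n (fun t ↦ f (t - 1)) = 3 * cyclicEval 3 n f := by
    simpa using hshift 1 f
  calc
    _ = cyclicEval 3 n ((fun t ↦ A (t - k)) + 2 • (fun t ↦ A (t - 1)) +
        (fun t ↦ A (t - 1 - k)) + 2 • ((fun t ↦ B (t - k)) + C)) := rfl
    _ = 3 ^ k * cyclicEval 3 n A + 2 * (3 * cyclicEval 3 n A) + 3 * (3 ^ k * cyclicEval 3 n A) +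
        2 * (3 ^ k * cyclicEval 3 n B + cyclicEval 3 n C) := by
      simp only [map_add, map_nsmul, hshift, hshift₁ fun t ↦ A (t - k), hshift₁ A]
      simp only [nsmul_eq_mul, Nat.cast_ofNat]
    _ = _ := by ring

theorem two_mul_lt_sum_of_cyclicEval_eq_zero {h : ℕ} (A : Fin 3 → ZMod (2 * h + 1) → ℕ)
    (hA : ∑ i, (![4 * 3 ^ (h + 1) + 6, 2 * 3 ^ (h + 1), 2] i : ℕ) *
      cyclicEval 3 (2 * h + 1) (A i) = 0)
    (hodd : Odd (∑ i, ∑ t, A i t)) : 2 * h < ∑ i, ∑ t, A i t := by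
  let δ : ZMod (2 * h + 1) := (h + 1 : ℕ)
  have hδ : 2 * δ = 1 := by
    have : ((2 * h + 1 : ℕ) : ZMod (2 * h + 1)) = 0 := ZMod.natCast_self _
    simp only [δ]
    push_cast at this ⊢
    linear_combination this
  let B (t : ZMod (2 * h + 1)) : ℕ := A 1 (t - δ) + A 2 t
  let w (t : ZMod (2 * h + 1)) : ℕ :=
    A 0 (t - δ) + 2 * A 0 (t - 1) + A 0 (t - 1 - δ) + 2 * B t
  have hsum : ∑ i, ∑ t, A i t = ∑ t, A 0 t + ∑ t, B t := by
    simp only [B, Fin.sum_univ_three, sum_add_distrib, sum_sub_right, add_assoc]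
  have hw : cyclicEval 3 (2 * h + 1) w = 0 := by
    rw [← hA, Fin.sum_univ_three]
    simpa [w, B, δ] using cyclicEval_carry_source (h + 1) (A 0) (A 1) (A 2)
  have hw0 : w ≠ 0 := fun hw0 ↦ by
    have hA0 (t : ZMod (2 * h + 1)) : A 0 t = 0 := by
      have := congrFun hw0 (t + 1)
      simp only [w, add_sub_cancel_right, Pi.zero_apply] at this
      lia
    have hB0 (t : ZMod (2 * h + 1)) : B t = 0 := by
      have := congrFun hw0 t
      simp only [w, Pi.zero_apply] at this
      lia
    simp [hsum, hA0, hB0] at hodd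
  obtain ⟨C, hC, hcarry⟩ := exists_carry (by lia) hw hw0
  rw [hsum] at hodd ⊢
  exact le_sum_of_carry hδ hC hcarry hodd

end CarryInequality

section ReeTitsDiffSet

open Finset

theorem IsSkewHadamard.image_reeTits {F : Type*} [Field F] [Finite F] [CharP F 3] {σ : F →+* F}
    (hσ : ∀ x, σ (σ x) = x ^ 3) {a : F} (ha : a ≠ 0) {D : Set F} (hD : IsSkewHadamard D) :
    IsSkewHadamard (reeTits σ a '' D) :=
  hD.image (Finite.injective_iff_bijective.1 (reeTits_injective hσ ha)) (reeTits_neg σ a)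

theorem reeTits_iterateFrobenius {F : Type*} [Field F] [CharP F 3] {k : ℕ} (a x : F) :
    reeTits (iterateFrobenius F 3 k) a x =
      x ^ (2 * 3 ^ k + 3) + a ^ 3 ^ k * x ^ 3 ^ k - a ^ 2 * x := by
  simp only [reeTits, iterateFrobenius_def]
  ring

variable {F : Type*} [Field F] [Fintype F] [CharP F 3] {h : ℕ}

theorem iterateFrobenius_iterateFrobenius_eq_cube (hcard : Fintype.card F = 3 ^ (2 * h + 1))
    (x : F) : iterateFrobenius F 3 (h + 1) (iterateFrobenius F 3 (h + 1) x) = x ^ 3 := by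
  rw [iterateFrobenius_def, iterateFrobenius_def, ← pow_mul,
    show 3 ^ (h + 1) * 3 ^ (h + 1) = 3 ^ (2 * h + 1) * 3 by ring, pow_mul, ← hcard,
    FiniteField.pow_card]

theorem pow_dvd_sum_trace_mul_reeTits [DecidableEq F] [Algebra (ZMod 3) F]
    (hcard : Fintype.card F = 3 ^ (2 * h + 1)) (a b : F) :
    (3 : ℤ) ^ h ∣ ∑ w ∈ ({0}ᶜ : Finset F).image (· ^ 2),
      (Algebra.trace (ZMod 3) F (b * reeTits (iterateFrobenius F 3 (h + 1)) a w)).valMinAbs := by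
  let φ (w : F) : ℤ :=
    (Algebra.trace (ZMod 3) F (b * reeTits (iterateFrobenius F 3 (h + 1)) a w)).valMinAbs
  have hall : (3 : ℤ) ^ h ∣ ∑ x, φ (x ^ 2) := by
    have := pow_dvd_sum_valMinAbs_trace hcard two_mul_lt_sum_of_cyclicEval_eq_zero
      ![b, b * a ^ 3 ^ (h + 1), -(b * a ^ 2)]
    convert this using 5 with x
    simp only [reeTits_iterateFrobenius, Fin.sum_univ_three, Matrix.cons_val]
    ring
  have hsquares : ∑ x, φ (x ^ 2) = 2 * ∑ w ∈ ({0}ᶜ : Finset F).image (· ^ 2), φ w := by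
    have hφ : φ (0 ^ 2) = 0 := by simp [φ, reeTits]
    have hchar : ringChar F ≠ 2 := by simp [ringChar.eq F 3]
    rw [Fintype.sum_eq_add_sum_compl 0, hφ, zero_add, sum_sq_eq_two_nsmul hchar, two_nsmul, two_mul]
  rw [hsquares] at hall
  exact (IsCoprime.pow_left (by norm_num : IsCoprime (3 : ℤ) 2)).dvd_of_dvd_mul_left hall

end ReeTitsDiffSet

theorem reeTits_skew_hadamard_diffSet {F : Type*} [Field F] [Fintype F] (h : ℕ)
    (hcard : Fintype.card F = 3 ^ (2 * h + 1)) (a : F) (ha : a ≠ 0) :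
    let q := 3 ^ (2 * h + 1)
    let α := 3 ^ (h + 1)
    let f : F → F := fun x => x ^ (2 * α + 3) + a ^ α * x ^ α - a ^ 2 * x
    let D : Set F := {y | ∃ x : F, x ≠ 0 ∧ y = f (x ^ 2)}
    IsDiffSet D q ((q - 1) / 2) ((q - 3) / 4) ∧ IsSkewHadamard D := by
  classical
  intro q α f D
  have : CharP F 3 := charP_of_card_eq_prime_pow hcard
  let _ : Algebra (ZMod 3) F := ZMod.algebra F 3
  let σ := iterateFrobenius F 3 (h + 1)
  let S : Finset F := ({0}ᶜ : Finset F).image (· ^ 2)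
  have hinj : Function.Injective (reeTits σ a) :=
    reeTits_injective (iterateFrobenius_iterateFrobenius_eq_cube hcard) ha
  have hD : D = (S.image (reeTits σ a) : Finset F) := by
    ext y
    simp [D, f, α, S, σ, reeTits_iterateFrobenius, eq_comm]
  have hskew : IsSkewHadamard D := by
    have hmod : Fintype.card F % 4 = 3 := hcard ▸ three_pow_two_mul_add_one_mod_four h
    rw [hD]
    simpa [S] using (isSkewHadamard_image_sq hmod).image_reeTits
      (iterateFrobenius_iterateFrobenius_eq_cube hcard) ha
  refine ⟨?_, hskew⟩
  rw [hD] at hskew ⊢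
  refine hskew.isDiffSet_of_pow_dvd_sum_trace hcard fun b ↦ ?_
  rw [Finset.sum_image hinj.injOn]
  exact pow_dvd_sum_trace_mul_reeTits hcard a b
end

section
/- Let q = 3^m with m = 2h+1 odd, and α = 3^{h+1}. For any β ∈ F_q* and a ∈ F_q*, the character sum S = Σ_{x ∈ F_q*} χ(x) · ξ₃^{Tr(x^{α+2} + (β^{α−1} a^α − β^{2(α−1)} a^{2α}) x)} satisfies S = ±√(−q); equivalently, S² = −q (so S = ± i · 3^h · √3). -/
/-!
Write `q = 3 ^ (2 * h + 1)` and `φ x = x ^ 3 ^ (h + 1)`, so that `φ (φ x) = x ^ 3`. Since the trace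
is invariant under `φ`, the argument `x ^ (α + 2) + (u - u ^ 2) * x` may be replaced by
`r x = φ x ^ 2 * x ^ 3 + φ u * φ x - u ^ 2 * x`, which is an odd permutation of the field. For each
`b` put `S b = ∑ x, χ x * ζ ^ Tr (b * r x)`; as `χ` and `r` are odd, `S b = N b * (ζ - ζ ^ 2)` with
`N b` an integer, and `N b` is odd for `b ≠ 0` because the fibres of `Tr (b * r x)` have odd size.

Orthogonality of characters gives `3 * ∑ b, N b ^ 2 = q * (q - 1)`, so `N b ^ 2` is on average
`q / 3 = 9 ^ h` over `b ≠ 0`. On the other hand `3 ^ h ∣ N b`: expanding the additive character in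
Gauss sums over `W(F)[ζ]` and applying Stickelberger's congruence, this reduces to a lower bound on
sums of base `3` digits, which follows from an analysis of carries. Being nonzero, `N b` satisfies
`N b ^ 2 ≥ 9 ^ h` for every `b ≠ 0`, and comparison with the average forces equality.
-/

section Digits

theorem card_le_sum_of_carries {X : Type*} [Fintype X] (σ : Equiv.Perm X) {a k c : X → ℤ}
    (ha : ∀ x, a x ∈ Set.Icc 0 2) (hk : ∀ x, k x ∈ Set.Icc 0 2) (hc : ∀ x, c x ∈ Set.Icc 1 4)
    (hrec : ∀ x, c (σ (σ x)) = 3 * c x - a (σ x) - 2 * a x - k x - 1) :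
    (Fintype.card X : ℤ) ≤ ∑ x, a x + ∑ x, k x := by
  -- `1 + a x ≤ c x` can fail, but only by an amount that `P` transfers along the orbits of `σ`.
  let P : X → ℤ := fun x ↦ if c x + 2 * c (σ x) + 2 * a x ≤ 7 then -1 else 0
  have hP (x : X) : P (σ x) - P x ≤ c x - 1 - a x := by
    have hcx := hc x
    have hcσ := hc (σ x)
    have hcσσ := hc (σ (σ x))
    have hax := ha x
    have haσ := ha (σ x)
    have hkx := hk x
    have := hrec x
    simp only [Set.mem_Icc] at hcx hcσ hcσσ hax haσ hkx
    grind
  have hsum_c : ∑ x, c (σ (σ x)) = ∑ x, c x := by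
    rw [Equiv.sum_comp σ fun x ↦ c (σ x), Equiv.sum_comp]
  have hsum_le := Finset.sum_le_sum fun x (_ : x ∈ Finset.univ) ↦ hP x
  simp only [hrec, Finset.sum_sub_distrib, ← Finset.mul_sum, Equiv.sum_comp σ a,
    Equiv.sum_comp σ P, Finset.sum_const, Finset.card_univ, nsmul_eq_mul, mul_one]
    at hsum_c hsum_le
  linarith

/-- The value of the base-`b` expansion whose cyclic sequence of digits `e`, of length `m`, is read
from position `i` upwards. -/
def cyclicValue (b : ℤ) {m : ℕ} (e : ZMod m → ℤ) (i : ZMod m) : ℤ :=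
  ∑ l ∈ Finset.range m, b ^ l * e (i + l)

section CyclicValue

variable {b : ℤ} {m : ℕ}

theorem mul_cyclicValue_add_one (e : ZMod m → ℤ) (i : ZMod m) :
    b * cyclicValue b e (i + 1) = cyclicValue b e i + (b ^ m - 1) * e i := by
  have h := Finset.sum_range_succ' (fun l : ℕ ↦ b ^ l * e (i + l)) m
  rw [Finset.sum_range_succ] at h
  have hshift : b * cyclicValue b e (i + 1) =
      ∑ l ∈ Finset.range m, b ^ (l + 1) * e (i + (l + 1 : ℕ)) := by
    rw [cyclicValue, Finset.mul_sum]
    refine Finset.sum_congr rfl fun l _ ↦ ?_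
    rw [Nat.cast_succ, add_comm (l : ZMod m) 1, add_assoc]
    ring
  simp only [CharP.cast_eq_zero, Nat.cast_zero, add_zero, pow_zero, one_mul] at h
  rw [hshift, cyclicValue]
  linarith

theorem pow_mul_cyclicValue_add_modEq (e : ZMod m → ℤ) (i : ZMod m) (s : ℕ) :
    b ^ s * cyclicValue b e (i + s) ≡ cyclicValue b e i [ZMOD b ^ m - 1] := by
  induction s with
  | zero => simp
  | succ s ih =>
    refine Int.ModEq.trans ?_ ih
    rw [Nat.cast_succ, ← add_assoc, pow_succ, mul_assoc, mul_cyclicValue_add_one, mul_add,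
      ← mul_assoc, mul_comm (b ^ s) (b ^ m - 1), mul_assoc]
    simp [Int.ModEq]

theorem dvd_cyclicValue [NeZero m] {e : ZMod m → ℤ} (h : b ^ m - 1 ∣ cyclicValue b e 0)
    (i : ZMod m) : b ^ m - 1 ∣ cyclicValue b e i := by
  have hmod := pow_mul_cyclicValue_add_modEq (b := b) e 0 i.val
  rw [zero_add, ZMod.natCast_zmod_val] at hmod
  have hb : IsCoprime (b ^ m - 1) (b ^ i.val) := by
    refine .pow_right ⟨-1, b ^ (m - 1), ?_⟩
    rw [pow_sub_one_mul (NeZero.ne m)]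
    ring
  exact hb.dvd_of_dvd_mul_left (hmod.dvd_iff.mpr h)

theorem sub_one_mul_cyclicValue_mem_Icc (hb : 1 ≤ b) {e : ZMod m → ℤ} {u v : ℤ}
    (he : ∀ i, e i ∈ Set.Icc u v) (i : ZMod m) :
    (b - 1) * cyclicValue b e i ∈ Set.Icc ((b ^ m - 1) * u) ((b ^ m - 1) * v) := by
  have hgeom (w : ℤ) : (b ^ m - 1) * w = (b - 1) * ∑ l ∈ Finset.range m, b ^ l * w := by
    rw [← Finset.sum_mul, ← mul_assoc, mul_comm (b - 1), geom_sum_mul]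
  have : 0 ≤ b - 1 := by linarith
  rw [hgeom, hgeom, cyclicValue]
  constructor <;> gcongr with l
  · exact (he _).1
  · exact (he _).2

end CyclicValue

theorem le_sum_add_sum_of_dvd_cyclicValue {h : ℕ} {a d : ZMod (2 * h + 1) → ℤ}
    (ha : ∀ i, a i ∈ Set.Icc 0 2) (hd : ∀ i, d i ∈ Set.Icc 0 2)
    (hdvd : 3 ^ (2 * h + 1) - 1 ∣
      cyclicValue 3 (fun i : ZMod (2 * h + 1) ↦ 1 + a (i + h) + 2 * a i + d i) 0) :
    2 * h + 1 ≤ ∑ i, a i + ∑ i, d i := by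
  set e : ZMod (2 * h + 1) → ℤ := fun i ↦ 1 + a (i + h) + 2 * a i + d i
  have hQ : (0 : ℤ) < 3 ^ (2 * h + 1) - 1 := sub_pos.mpr (one_lt_pow₀ (by norm_num) (by omega))
  have he (i) : e i ∈ Set.Icc 1 9 := by
    have h1 := ha i
    have h2 := ha (i + h)
    have h3 := hd i
    simp only [e, Set.mem_Icc] at h1 h2 h3 ⊢
    omega
  choose c hc using dvd_cyclicValue hdvd
  have hcrec (i) : 3 * c (i + 1) = c i + e i := by
    have := mul_cyclicValue_add_one (b := 3) e i
    rw [hc, hc] at this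
    exact mul_left_cancel₀ hQ.ne' (by linear_combination this)
  have hcIcc (i) : c i ∈ Set.Icc 1 4 := by
    have := sub_one_mul_cyclicValue_mem_Icc (b := 3) (by norm_num) he i
    rw [hc, mul_left_comm, Set.mem_Icc, mul_le_mul_iff_right₀ hQ, mul_le_mul_iff_right₀ hQ] at this
    rw [Set.mem_Icc]
    omega
  have hper (i : ZMod (2 * h + 1)) : i + h + h + 1 = i := by
    have := ZMod.natCast_self (2 * h + 1)
    push_cast at this
    linear_combination this
  -- Since `2 * h = -1` modulo `2 * h + 1`, two rotations by `h` undo one carry step.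
  have hmain := card_le_sum_of_carries (Equiv.addRight (h : ZMod (2 * h + 1))) ha hd
    (c := fun i ↦ c (i + 1)) (fun i ↦ hcIcc _) fun i ↦ by
      have := hcrec i
      simp only [Equiv.coe_addRight, hper, e] at this ⊢
      linarith
  simpa [ZMod.card] using hmain

/-- The base-`b` digits of `j` as a cyclic sequence of length `m`. -/
def cyclicDigit (b m j : ℕ) (i : ZMod m) : ℕ :=
  j / b ^ i.val % b

theorem cyclicDigit_natCast {b m l : ℕ} (j : ℕ) (hl : l < m) :
    cyclicDigit b m j l = j / b ^ l % b := by
  rw [cyclicDigit, ZMod.val_natCast_of_lt hl]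

theorem sum_pow_mul_div_pow_mod {b m j : ℕ} (c : ℕ) (hb : 1 < b) (hj : j < b ^ m) :
    ∑ l ∈ Finset.range m, c ^ l * (j / b ^ l % b) = Nat.ofDigits c (Nat.digits b j) := by
  induction m generalizing j with
  | zero => simp_all
  | succ m ih =>
    obtain rfl | hj0 := eq_or_ne j 0
    · simp
    have hj' : j / b < b ^ m := Nat.div_lt_of_lt_mul (by rwa [← pow_succ'])
    rw [Nat.digits_def' hb hj0.bot_lt, Nat.ofDigits_cons, ← ih hj', Finset.mul_sum,
      Finset.sum_range_succ', add_comm]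
    simp only [Nat.div_div_eq_div_mul, pow_zero, one_mul, Nat.div_one, ← mul_assoc, ← pow_succ']

theorem cyclicValue_cyclicDigit_zero {b m j : ℕ} (hb : 1 < b) (hj : j < b ^ m) :
    cyclicValue b (fun i ↦ (cyclicDigit b m j i : ℤ)) 0 = j := by
  conv_rhs => rw [← Nat.ofDigits_digits b j, ← sum_pow_mul_div_pow_mod b hb hj]
  push_cast [cyclicValue]
  refine Finset.sum_congr rfl fun l hl ↦ ?_
  rw [zero_add, cyclicDigit_natCast j (Finset.mem_range.mp hl)]
  norm_cast

theorem sum_cyclicDigit {b m j : ℕ} [NeZero m] (hb : 1 < b) (hj : j < b ^ m) :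
    ∑ i, cyclicDigit b m j i = (Nat.digits b j).sum := by
  rw [← Nat.ofDigits_one, ← sum_pow_mul_div_pow_mod 1 hb hj]
  obtain _ | m := m
  · exact absurd rfl (NeZero.ne 0)
  · simp only [one_pow, one_mul]
    exact Fin.sum_univ_eq_sum_range (fun l ↦ j / b ^ l % b) (m + 1)

theorem natCast_cyclicDigit_mem_Icc {b : ℕ} (hb : 1 < b) (m j : ℕ) (i : ZMod m) :
    (cyclicDigit b m j i : ℤ) ∈ Set.Icc 0 (b - 1 : ℤ) := by
  have := Nat.mod_lt (j / b ^ i.val) (zero_lt_one.trans hb)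
  simp only [cyclicDigit, Set.mem_Icc]
  omega

theorem le_sum_digits_add_sum_digits {h j k : ℕ} (hj : j < 3 ^ (2 * h + 1))
    (hk : k < 3 ^ (2 * h + 1))
    (hdvd : 3 ^ (2 * h + 1) - 1 ∣ (3 ^ (2 * h + 1) - 1) / 2 + (3 ^ (h + 1) + 2) * j + k) :
    2 * h + 1 ≤ (Nat.digits 3 j).sum + (Nat.digits 3 k).sum := by
  let a : ZMod (2 * h + 1) → ℤ := fun i ↦ cyclicDigit 3 (2 * h + 1) j i
  let d : ZMod (2 * h + 1) → ℤ := fun i ↦ cyclicDigit 3 (2 * h + 1) k i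
  have haj : cyclicValue 3 a 0 = j := cyclicValue_cyclicDigit_zero (by norm_num) hj
  have hdk : cyclicValue 3 d 0 = k := cyclicValue_cyclicDigit_zero (by norm_num) hk
  have hvalue : cyclicValue 3 (fun i : ZMod (2 * h + 1) ↦ 1 + a (i + h) + 2 * a i + d i) 0 =
      ((3 ^ (2 * h + 1) - 1) / 2 : ℕ) + cyclicValue 3 a h + 2 * j + k := by
    rw [← haj, ← hdk, ← Nat.geomSum_eq (by norm_num)]
    simp only [cyclicValue, mul_add, Finset.sum_add_distrib, Finset.mul_sum, zero_add]
    push_cast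
    simp only [mul_one, add_comm (h : ZMod (2 * h + 1)), mul_left_comm (2 : ℤ)]
  have hshift : 3 ^ (h + 1) * (j : ℤ) ≡ cyclicValue 3 a h [ZMOD 3 ^ (2 * h + 1) - 1] := by
    have hmod := pow_mul_cyclicValue_add_modEq (b := 3) a h (h + 1)
    rwa [← Nat.cast_add, ← add_assoc, ← two_mul, ZMod.natCast_self, haj] at hmod
  have hdvd' : (3 : ℤ) ^ (2 * h + 1) - 1 ∣
      cyclicValue 3 (fun i : ZMod (2 * h + 1) ↦ 1 + a (i + h) + 2 * a i + d i) 0 := by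
    generalize (3 ^ (2 * h + 1) - 1) / 2 = M at hdvd hvalue
    have hdvd₀ := Int.natCast_dvd_natCast.mpr hdvd
    rw [Nat.cast_sub (Nat.one_le_pow' _ _)] at hdvd₀
    push_cast at hdvd₀
    rw [hvalue]
    obtain ⟨u, hu⟩ := hdvd₀
    obtain ⟨v, hv⟩ := hshift.dvd
    exact ⟨u + v, by linear_combination hu + hv⟩
  have hsum : (2 * h + 1 : ℤ) ≤ ∑ i, (cyclicDigit 3 (2 * h + 1) j i : ℤ) +
      ∑ i, (cyclicDigit 3 (2 * h + 1) k i : ℤ) :=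
    le_sum_add_sum_of_dvd_cyclicValue (natCast_cyclicDigit_mem_Icc (by norm_num) _ j)
      (natCast_cyclicDigit_mem_Icc (by norm_num) _ k) hdvd'
  rw [← sum_cyclicDigit (by norm_num) hj, ← sum_cyclicDigit (by norm_num) hk]
  exact_mod_cast hsum

end Digits

section Stickelberger

theorem sum_digits_base_mul (b n : ℕ) (hb : 1 < b) :
    (Nat.digits b (b * n)).sum = (Nat.digits b n).sum := by
  obtain rfl | hn := n.eq_zero_or_pos
  · simp
  · rw [Nat.digits_base_mul hb hn, List.sum_cons, zero_add]

theorem sum_digits_succ {b n : ℕ} (hb : 1 < b) (hn : ¬b ∣ n + 1) :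
    (Nat.digits b (n + 1)).sum = (Nat.digits b n).sum + 1 := by
  have hdiv : (n + 1) / b = n / b := Nat.succ_div_of_not_dvd hn
  have hmod : (n + 1) % b = n % b + 1 := by
    have h1 := Nat.div_add_mod (n + 1) b
    have h2 := Nat.div_add_mod n b
    rw [hdiv] at h1
    omega
  obtain rfl | hn0 := n.eq_zero_or_pos
  · simp [Nat.digits_of_lt b 1 one_ne_zero hb]
  · rw [Nat.digits_def' hb n.succ_pos, Nat.digits_def' hb hn0, hdiv, hmod, List.sum_cons,
      List.sum_cons]
    ring

section FiniteField

variable {F : Type*} [Field F] [Fintype F]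

theorem sum_inv_eq_zero (hq : 2 < Fintype.card F) : ∑ x : F, x⁻¹ = 0 := by
  have hsum := FiniteField.sum_pow_lt_card_sub_one F 1 (by omega)
  exact (inv_involutive.bijective.sum_comp fun x ↦ x).trans (by simpa using hsum)

theorem sum_pow_mul_inv_one_sub {n : ℕ} (hn : n ≤ Fintype.card F - 1) (hq : 2 < Fintype.card F) :
    ∑ x : F, x ^ n * (1 - x)⁻¹ = n := by
  classical
  have hgeom (x : F) : x ^ n * (1 - x)⁻¹ =
      (1 - x)⁻¹ - ∑ i ∈ Finset.range n, x ^ i + if x = 1 then (n : F) else 0 := by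
    obtain rfl | hx := eq_or_ne x 1
    · simp
    · have hx' : 1 - x ≠ 0 := sub_ne_zero.mpr hx.symm
      rw [if_neg hx]
      field_simp
      linear_combination -geom_sum_mul x n
  have hinv : ∑ x : F, (1 - x)⁻¹ = 0 :=
    (Equiv.sum_comp (Equiv.subLeft (1 : F)) (·⁻¹)).trans (sum_inv_eq_zero hq)
  have hpow : ∑ i ∈ Finset.range n, ∑ x : F, x ^ i = 0 :=
    Finset.sum_eq_zero fun i hi ↦ FiniteField.sum_pow_lt_card_sub_one F i <|
      (Finset.mem_range.mp hi).trans_le hn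
  rw [Finset.sum_congr rfl fun x _ ↦ hgeom x, Finset.sum_add_distrib, Finset.sum_sub_distrib,
    Finset.sum_comm, hinv, hpow]
  simp

end FiniteField

theorem isCoprime_of_map_ne_zero {R F : Type*} [CommRing R] [Field F] {ρ : R →+* F} {π : R}
    (hρ : Function.Surjective ρ) (hker : ∀ x, ρ x = 0 → π ∣ x) {y : R} (hy : ρ y ≠ 0) :
    IsCoprime π y := by
  obtain ⟨z, hz⟩ := hρ (ρ y)⁻¹
  obtain ⟨w, hw⟩ := hker (1 - y * z) (by rw [map_sub, map_mul, hz, map_one, mul_inv_cancel₀ hy,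
    sub_self])
  exact ⟨w, z, by linear_combination -hw⟩

theorem map_addChar_eq_one {p : ℕ} [Fact p.Prime] {F R : Type*} [Ring F] [CharP F p] [CommRing R]
    {K : Type*} [Field K] [CharP K p] (ρ : R →+* K) (ψ : AddChar F R) (x : F) : ρ (ψ x) = 1 := by
  refine frobenius_inj K p ?_
  rw [frobenius_def, frobenius_def, one_pow, ← map_pow, ← AddChar.map_nsmul_eq_pow]
  simp

section Teichmuller

variable {F R : Type*} [Field F] [CommRing R] {ρ : R →+* F} {ω : MulChar F R}

theorem pow_apply_of_ne_zero (ω : MulChar F R) {x : F} (hx : x ≠ 0) (n : ℕ) :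
    (ω ^ n) x = ω x ^ n :=
  MulChar.pow_apply_coe ω n (Units.mk0 x hx)

theorem inv_pow_apply (ω : MulChar F R) {x : F} (hx : x ≠ 0) (n : ℕ) :
    (ω⁻¹ ^ n) x = ω x⁻¹ ^ n := by
  rw [pow_apply_of_ne_zero ω⁻¹ hx, MulChar.inv_apply']

variable [Fintype F]

theorem intCast_quadraticChar_eq_pow [IsDomain R] [DecidableEq F]
    (hω : Function.RightInverse ω ρ) (hF : ringChar F ≠ 2) (x : F) :
    ((quadraticChar F x : ℤ) : R) = (ω ^ (Fintype.card F / 2)) x := by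
  obtain rfl | hx := eq_or_ne x 0
  · rw [MulChar.map_zero, MulChar.map_zero, Int.cast_zero]
  have hneg : ω (-1) = -1 := by
    have hsq : ω (-1) ^ 2 = 1 := by rw [← map_pow, neg_one_sq, map_one]
    refine (sq_eq_one_iff.mp hsq).resolve_left fun h ↦ ?_
    exact Ring.neg_one_ne_one_of_char_ne_two hF (by rw [← hω (-1), h, map_one])
  rw [pow_apply_of_ne_zero ω hx, ← map_pow, ← quadraticChar_eq_pow_of_char_ne_two' hF]
  obtain h | h := quadraticChar_dichotomy hx <;> simp [h, hneg]

theorem card_sub_one_dvd_of_pow_eq_one (hω : Function.RightInverse ω ρ) {n : ℕ} (hn : ω ^ n = 1) :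
    Fintype.card F - 1 ∣ n := by
  refine (FiniteField.forall_pow_eq_one_iff F n).mp fun x ↦ Units.ext ?_
  have h := congrArg (fun χ : MulChar F R ↦ ρ (χ x)) hn
  simpa [MulChar.pow_apply_coe, hω (x : F)] using h

theorem map_jacobiSum_inv_pow_inv (hω : Function.RightInverse ω ρ) {n : ℕ}
    (hn : n + 1 < Fintype.card F - 1) : ρ (jacobiSum (ω⁻¹ ^ n) ω⁻¹) = -(n + 1) := by
  have hcast : -(n + 1 : F) = (Fintype.card F - 1 - n : ℕ) := by
    rw [Nat.sub_sub, Nat.cast_sub (by omega), Nat.cast_card_eq_zero]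
    push_cast
    ring
  rw [hcast, ← sum_pow_mul_inv_one_sub (F := F) (by omega) (by omega), jacobiSum, map_sum]
  refine Finset.sum_congr rfl fun x _ ↦ ?_
  rw [map_mul, MulChar.inv_apply', hω]
  congr 1
  obtain rfl | hx := eq_or_ne x 0
  · rw [MulChar.map_zero, map_zero, zero_pow (by omega)]
  · rw [inv_pow_apply ω hx, map_pow, hω, inv_pow]
    refine inv_eq_of_mul_eq_one_right ?_
    rw [← pow_add, Nat.add_sub_cancel' (by omega), FiniteField.pow_card_sub_one_eq_one x hx]

variable {p : ℕ} [Fact p.Prime] [CharP F p] {π : R} {ψ : AddChar F R}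

theorem gaussSum_pow_char (χ : MulChar F R) (hψ : ∀ x, ψ (x ^ p) = ψ x) :
    gaussSum (χ ^ p) ψ = gaussSum χ ψ := by
  have hbij : Function.Bijective (frobenius F p) :=
    Finite.injective_iff_bijective.mp (frobenius_inj F p)
  rw [gaussSum, gaussSum, ← hbij.sum_comp fun x ↦ χ x * ψ x]
  refine Finset.sum_congr rfl fun x _ ↦ ?_
  rw [frobenius_def, hψ, MulChar.pow_apply' χ (Fact.out : p.Prime).ne_zero, map_pow]

theorem dvd_gaussSum_inv (hω : Function.RightInverse ω ρ) (hker : ∀ x, ρ x = 0 → π ∣ x)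
    (ψ : AddChar F R) (hq : 2 < Fintype.card F) : π ∣ gaussSum ω⁻¹ ψ := by
  obtain ⟨p, hp⟩ := CharP.exists F
  have := Fact.mk (CharP.char_is_prime F p)
  refine hker _ ?_
  rw [gaussSum, map_sum, ← sum_inv_eq_zero hq]
  refine Finset.sum_congr rfl fun x _ ↦ ?_
  rw [map_mul, map_addChar_eq_one (p := p) ρ ψ, MulChar.inv_apply', hω, mul_one]

theorem pow_sum_digits_dvd_gaussSum [IsDomain R] (hω : Function.RightInverse ω ρ)
    (hker : ∀ x, ρ x = 0 → π ∣ x) (hψ : ∀ x, ψ (x ^ p) = ψ x) {a : ℕ}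
    (ha : a < Fintype.card F - 1) : π ^ (Nat.digits p a).sum ∣ gaussSum (ω⁻¹ ^ a) ψ := by
  have hp : 1 < p := (Fact.out : p.Prime).one_lt
  induction a using Nat.strong_induction_on with | _ a ih
  by_cases hpa : p ∣ a
  · obtain ⟨b, rfl⟩ := hpa
    obtain rfl | hb := b.eq_zero_or_pos
    · simp
    · have hlt : b < p * b := lt_mul_left hb hp
      rw [sum_digits_base_mul p b hp, pow_mul', gaussSum_pow_char _ hψ]
      exact ih b hlt (hlt.trans ha)
  · obtain ⟨b, rfl⟩ := Nat.exists_eq_succ_of_ne_zero (n := a) (by rintro rfl; simp at hpa)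
    have hne : ω⁻¹ ^ b * ω⁻¹ ≠ 1 := by
      rw [← pow_succ, inv_pow, Ne, inv_eq_one]
      intro h
      exact absurd (Nat.le_of_dvd b.succ_pos (card_sub_one_dvd_of_pow_eq_one hω h)) ha.not_ge
    have hmul := mul_dvd_mul (ih b b.lt_succ_self (b.lt_succ_self.trans ha))
      (dvd_gaussSum_inv hω hker ψ (by omega))
    have hcop : IsCoprime π (jacobiSum (ω⁻¹ ^ b) ω⁻¹) := by
      refine isCoprime_of_map_ne_zero hω.surjective hker ?_
      rw [map_jacobiSum_inv_pow_inv hω ha, neg_ne_zero]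
      exact_mod_cast (CharP.cast_eq_zero_iff F p (b + 1)).not.mpr hpa
    rw [← jacobiSum_mul_nontrivial hne ψ, ← pow_succ, ← pow_succ] at hmul
    rw [Nat.succ_eq_add_one, sum_digits_succ hp hpa]
    exact hcop.pow_left.dvd_of_dvd_mul_right hmul

theorem sum_map_pow_eq_zero [IsDomain R] (hω : Function.RightInverse ω ρ) {x : F} (hx : x ≠ 0)
    (hx1 : x ≠ 1) : ∑ k ∈ Finset.range (Fintype.card F - 1), ω x ^ k = 0 := by
  have hgeom := geom_sum_mul (ω x) (Fintype.card F - 1)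
  rw [← map_pow, FiniteField.pow_card_sub_one_eq_one x hx, map_one, sub_self] at hgeom
  refine (mul_eq_zero.mp hgeom).resolve_right (sub_ne_zero.mpr fun h ↦ hx1 ?_)
  rw [← hω x, h, map_one]

theorem sum_gaussSum_mul_pow [IsDomain R] (hω : Function.RightInverse ω ρ) (ψ : AddChar F R)
    {x : F} (hx : x ≠ 0) :
    ∑ k ∈ Finset.range (Fintype.card F - 1), gaussSum (ω⁻¹ ^ k) ψ * ω x ^ k =
      (Fintype.card F - 1 : ℕ) * ψ x := by
  simp_rw [gaussSum, Finset.sum_mul]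
  rw [Finset.sum_comm, Finset.sum_eq_single x _ (by simp)]
  · have hcancel (k : ℕ) : (ω⁻¹ ^ k) x * ψ x * ω x ^ k = ψ x := by
      rw [inv_pow_apply ω hx, mul_right_comm, ← mul_pow, ← map_mul, inv_mul_cancel₀ hx]
      simp
    simp only [hcancel, Finset.sum_const, Finset.card_range, nsmul_eq_mul]
  · intro y _ hyx
    obtain rfl | hy := eq_or_ne y 0
    · simp only [MulChar.map_zero, zero_mul, Finset.sum_const_zero]
    · have hfactor (k : ℕ) : (ω⁻¹ ^ k) y * ψ y * ω x ^ k = ψ y * ω (y⁻¹ * x) ^ k := by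
        rw [inv_pow_apply ω hy, map_mul, mul_pow]
        ring
      rw [Finset.sum_congr rfl fun k _ ↦ hfactor k, ← Finset.mul_sum,
        sum_map_pow_eq_zero hω (mul_ne_zero (inv_ne_zero hy) hx), mul_zero]
      rwa [Ne, inv_mul_eq_one₀ hy]

theorem exists_addChar_mul_eq_sum_pow [IsDomain R] (hω : Function.RightInverse ω ρ)
    (hker : ∀ x, ρ x = 0 → π ∣ x) (hψ : ∀ x, ψ (x ^ p) = ψ x) (b : F) :
    ∃ c : ℕ → R, (∀ k < Fintype.card F - 1, π ^ (Nat.digits p k).sum ∣ c k) ∧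
      ∀ x ≠ 0, (Fintype.card F - 1 : ℕ) * ψ (b * x) =
        ∑ k ∈ Finset.range (Fintype.card F - 1), c k * ω x ^ k := by
  obtain rfl | hb := eq_or_ne b 0
  · refine ⟨Pi.single 0 ((Fintype.card F - 1 : ℕ) : R), fun k _ ↦ ?_, fun x _ ↦ ?_⟩
    · obtain rfl | hk := eq_or_ne k 0 <;> simp [*]
    · have hq := Finset.mem_range.mpr (Nat.sub_pos_of_lt (Fintype.one_lt_card (α := F)))
      rw [Finset.sum_eq_single_of_mem 0 hq fun k _ hk ↦ by simp [hk]]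
      simp
  · refine ⟨fun k ↦ gaussSum (ω⁻¹ ^ k) ψ * ω b ^ k, fun k hk ↦
      (pow_sum_digits_dvd_gaussSum hω hker hψ hk).mul_right _, fun x hx ↦ ?_⟩
    rw [← sum_gaussSum_mul_pow hω ψ (mul_ne_zero hb hx)]
    exact Finset.sum_congr rfl fun k _ ↦ by rw [map_mul, mul_pow, mul_assoc]

theorem exists_sum_pow_mul_addChar_eq [IsDomain R] (hω : Function.RightInverse ω ρ)
    (hker : ∀ x, ρ x = 0 → π ∣ x) (hψ : ∀ x, ψ (x ^ p) = ψ x) (n e : ℕ) (b c : F) :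
    ∃ B C : ℕ → R, (∀ j < Fintype.card F - 1, π ^ (Nat.digits p j).sum ∣ B j) ∧
      (∀ k < Fintype.card F - 1, π ^ (Nat.digits p k).sum ∣ C k) ∧
      (Fintype.card F - 1 : ℕ) ^ 2 * ∑ x, (ω ^ n) x * ψ (b * x ^ e + c * x) =
        ∑ j ∈ Finset.range (Fintype.card F - 1), ∑ k ∈ Finset.range (Fintype.card F - 1),
          B j * C k * ∑ x, (ω ^ (n + e * j + k)) x := by
  obtain ⟨B, hB, hbB⟩ := exists_addChar_mul_eq_sum_pow hω hker hψ b
  obtain ⟨C, hC, hcC⟩ := exists_addChar_mul_eq_sum_pow hω hker hψ c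
  refine ⟨B, C, hB, hC, ?_⟩
  have hterm (x : F) : (Fintype.card F - 1 : ℕ) ^ 2 * ((ω ^ n) x * ψ (b * x ^ e + c * x)) =
      ∑ j ∈ Finset.range (Fintype.card F - 1), ∑ k ∈ Finset.range (Fintype.card F - 1),
        B j * C k * (ω ^ (n + e * j + k)) x := by
    obtain rfl | hx := eq_or_ne x 0
    · simp only [MulChar.map_zero, zero_mul, mul_zero, Finset.sum_const_zero]
    · calc (Fintype.card F - 1 : ℕ) ^ 2 * ((ω ^ n) x * ψ (b * x ^ e + c * x))
        _ = ω x ^ n * (((Fintype.card F - 1 : ℕ) * ψ (b * x ^ e)) *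
              ((Fintype.card F - 1 : ℕ) * ψ (c * x))) := by
          rw [pow_apply_of_ne_zero ω hx, AddChar.map_add_eq_mul]
          ring
        _ = _ := by
          rw [hbB _ (pow_ne_zero e hx), hcC x hx, Finset.sum_mul_sum, Finset.mul_sum]
          refine Finset.sum_congr rfl fun j _ ↦ ?_
          rw [Finset.mul_sum]
          refine Finset.sum_congr rfl fun k _ ↦ ?_
          rw [pow_apply_of_ne_zero ω hx, map_pow]
          ring
  rw [Finset.mul_sum, Finset.sum_congr rfl fun x _ ↦ hterm x, Finset.sum_comm]
  refine Finset.sum_congr rfl fun j _ ↦ ?_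
  rw [Finset.sum_comm]
  simp only [Finset.mul_sum]

theorem pow_dvd_sum_pow_mul_addChar [IsDomain R] (hω : Function.RightInverse ω ρ)
    (hker : ∀ x, ρ x = 0 → π ∣ x) (hψ : ∀ x, ψ (x ^ p) = ψ x) {n e m : ℕ}
    (hm : ∀ j < Fintype.card F - 1, ∀ k < Fintype.card F - 1,
      Fintype.card F - 1 ∣ n + e * j + k → m ≤ (Nat.digits p j).sum + (Nat.digits p k).sum)
    (b c : F) : π ^ m ∣ ∑ x, (ω ^ n) x * ψ (b * x ^ e + c * x) := by
  obtain ⟨B, C, hB, hC, hsum⟩ := exists_sum_pow_mul_addChar_eq hω hker hψ n e b c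
  have hcop : IsCoprime π ((Fintype.card F - 1 : ℕ) ^ 2 : R) := by
    refine isCoprime_of_map_ne_zero hω.surjective hker ?_
    rw [map_pow, map_natCast, Nat.cast_sub Fintype.card_pos, Nat.cast_card_eq_zero]
    simp
  refine hcop.pow_left.dvd_of_dvd_mul_left ?_
  rw [hsum]
  refine Finset.dvd_sum fun j hj ↦ Finset.dvd_sum fun k hk ↦ ?_
  rw [Finset.mem_range] at hj hk
  by_cases hdvd : Fintype.card F - 1 ∣ n + e * j + k
  · refine Dvd.dvd.mul_right ((pow_dvd_pow π (hm j hj k hk hdvd)).trans ?_) _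
    rw [pow_add]
    exact mul_dvd_mul (hB j hj) (hC k hk)
  · rw [MulChar.sum_eq_zero_of_ne_one fun h ↦ hdvd (card_sub_one_dvd_of_pow_eq_one hω h), mul_zero]
    exact dvd_zero _

end Teichmuller
end Stickelberger

section Cyclotomic

open Polynomial

theorem pow_dvd_of_natCast_pow_dvd_intCast {p : ℕ} {R K : Type*} [CommRing R] [IsDomain R]
    [Ring K] [CharP K p] (ρ : R →+* K) (hp : (p : R) ≠ 0) {k : ℕ} {n : ℤ}
    (h : (p : R) ^ k ∣ n) : (p : ℤ) ^ k ∣ n := by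
  induction k generalizing n with
  | zero => exact (pow_zero (p : ℤ)).symm ▸ one_dvd n
  | succ k ih =>
    have hρ : ρ n = 0 := by
      obtain ⟨y, hy⟩ := (dvd_pow_self (p : R) k.succ_ne_zero).trans h
      rw [hy, map_mul, map_natCast, CharP.cast_eq_zero, zero_mul]
    obtain ⟨m, rfl⟩ := (CharP.intCast_eq_zero_iff K p n).mp (by rwa [← map_intCast ρ])
    rw [pow_succ', Int.cast_mul, Int.cast_natCast, mul_dvd_mul_iff_left hp] at h
    exact pow_succ' (p : ℤ) k ▸ mul_dvd_mul_left _ (ih h)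

theorem monic_cyclotomic_comp_X_add_one (n : ℕ) (S : Type*) [CommRing S] :
    ((cyclotomic n S).comp (X + 1)).Monic := by
  simpa using (cyclotomic.monic n S).comp_X_add_C 1

section Prime

variable (p : ℕ) [Fact p.Prime] (S : Type*) [CommRing S]

theorem coeff_zero_cyclotomic_comp_X_add_one : ((cyclotomic p S).comp (X + 1)).coeff 0 = p := by
  simp [coeff_zero_eq_eval_zero, eval_comp, eval_one_cyclotomic_prime]

variable [IsDomain S]

theorem natDegree_cyclotomic_comp_X_add_one_pos :
    0 < ((cyclotomic p S).comp (X + 1)).natDegree := by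
  rw [natDegree_comp, ← map_one C, natDegree_X_add_C, mul_one, natDegree_cyclotomic]
  exact Nat.totient_pos.mpr (Fact.out : p.Prime).pos

variable {p S} in
theorem irreducible_cyclotomic_comp_X_add_one (hp : Prime (p : S)) :
    Irreducible ((cyclotomic p S).comp (X + 1)) := by
  have hprime : (Ideal.span {(p : S)}).IsPrime := (Ideal.span_singleton_prime hp.ne_zero).mpr hp
  have hmonic := monic_cyclotomic_comp_X_add_one p S
  have hweak : ((cyclotomic p S).comp (X + 1)).IsWeaklyEisensteinAt (Ideal.span {(p : S)}) := by
    simpa [Ideal.map_span, Polynomial.map_comp] using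
      (cyclotomic_comp_X_add_one_isEisensteinAt p).isWeaklyEisensteinAt.map (Int.castRingHom S)
  have hcoeff : ((cyclotomic p S).comp (X + 1)).coeff 0 ∉ Ideal.span {(p : S)} ^ 2 := by
    rw [coeff_zero_cyclotomic_comp_X_add_one, Ideal.span_singleton_pow, Ideal.mem_span_singleton]
    intro h
    rw [← pow_one (p : S), ← pow_mul, pow_dvd_pow_iff hp.ne_zero hp.not_isUnit] at h
    exact absurd h (by decide)
  exact (hmonic.isEisensteinAt_of_mem_of_notMem hprime.ne_top hweak.mem hcoeff).irreducible hprime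
    hmonic.isPrimitive (natDegree_cyclotomic_comp_X_add_one_pos p S)

end Prime

/-- The ring `W(F)[ζ]` of Witt vectors with a primitive `p`-th root of unity `ζ` adjoined. It is
presented by its uniformizer `ζ - 1`, whose minimal polynomial is Eisenstein at `p`. -/
abbrev WittCyclotomic (p : ℕ) [Fact p.Prime] (F : Type*) [Field F] : Type _ :=
  AdjoinRoot ((cyclotomic p (WittVector p F)).comp (X + 1))

namespace WittCyclotomic

variable (p : ℕ) [Fact p.Prime] (F : Type*) [Field F]

/-- The uniformizer `ζ - 1` of `W(F)[ζ]`. -/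
noncomputable def uniformizer : WittCyclotomic p F :=
  AdjoinRoot.root _

theorem eval_cyclotomic_uniformizer_add_one :
    (cyclotomic p (WittCyclotomic p F)).eval (uniformizer p F + 1) = 0 := by
  have hroot : aeval (uniformizer p F) ((cyclotomic p (WittVector p F)).comp (X + 1)) = 0 :=
    (AdjoinRoot.aeval_eq _).trans AdjoinRoot.mk_self
  rwa [aeval_comp, map_add, aeval_X, map_one, ← eval_map_algebraMap, map_cyclotomic] at hroot

/-- The Teichmüller character of `F`, with values in `W(F)[ζ]`. -/
noncomputable def teichmuller : MulChar F (WittCyclotomic p F) where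
  toMonoidHom := (algebraMap (WittVector p F) (WittCyclotomic p F) : _ →* _).comp
    (WittVector.teichmuller p)
  map_nonunit' x hx := by
    obtain rfl : x = 0 := by simpa using hx
    simp [WittVector.teichmuller_zero]

variable [CharP F p]

/-- The reduction map `W(F)[ζ] →+* F`, under which `ζ` maps to `1`. -/
noncomputable def reduction : WittCyclotomic p F →+* F :=
  AdjoinRoot.lift WittVector.constantCoeff 0 <| by
    rw [eval₂_at_zero, coeff_zero_cyclotomic_comp_X_add_one, map_natCast, CharP.cast_eq_zero]

theorem rightInverse_teichmuller :
    Function.RightInverse (teichmuller p F) (reduction p F) := fun x ↦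
  (AdjoinRoot.lift_of _).trans (WittVector.teichmuller_coeff_zero p x)

theorem natCast_ne_zero : (p : WittCyclotomic p F) ≠ 0 := by
  have hdeg : ((cyclotomic p (WittVector p F)).comp (X + 1)).degree ≠ 0 :=
    (natDegree_pos_iff_degree_pos.mp (natDegree_cyclotomic_comp_X_add_one_pos p _)).ne'
  rw [← map_natCast (AdjoinRoot.of _)]
  exact (map_ne_zero_iff _ (AdjoinRoot.of.injective_of_degree_ne_zero hdeg)).mpr
    (WittVector.p_nonzero p F)

variable [PerfectRing F p]

instance : IsDomain (WittCyclotomic p F) := by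
  have := WittVector.isDiscreteValuationRing (p := p) (k := F)
  exact AdjoinRoot.isDomain_of_prime
    (irreducible_cyclotomic_comp_X_add_one (WittVector.irreducible p).prime).prime

variable {p F} in
theorem uniformizer_dvd_of_reduction_eq_zero {x : WittCyclotomic p F}
    (hx : reduction p F x = 0) : uniformizer p F ∣ x := by
  have hmk (f : (WittVector p F)[X]) :
      uniformizer p F ∣ AdjoinRoot.mk _ f - algebraMap _ _ (f.coeff 0) := by
    have := map_dvd (AdjoinRoot.mk ((cyclotomic p (WittVector p F)).comp (X + 1)))
      (X_dvd_sub_C (p := f))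
    rwa [map_sub] at this
  have hp : uniformizer p F ∣ p := by
    have := hmk ((cyclotomic p (WittVector p F)).comp (X + 1))
    rwa [AdjoinRoot.mk_self, coeff_zero_cyclotomic_comp_X_add_one, map_natCast, zero_sub,
      dvd_neg] at this
  obtain ⟨f, rfl⟩ := AdjoinRoot.mk_surjective x
  have hf : f.coeff 0 ∈ Ideal.span {(p : WittVector p F)} := by
    rw [← WittVector.ker_constantCoeff, RingHom.mem_ker]
    simpa [reduction, eval₂_at_zero] using hx
  obtain ⟨c, hc⟩ := Ideal.mem_span_singleton.mp hf
  have := hmk f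
  rw [hc, map_mul, map_natCast] at this
  exact (dvd_sub_left (hp.mul_right _)).mp this

end WittCyclotomic
end Cyclotomic

section FiberSum

variable {ι G : Type*} [Fintype ι] [DecidableEq G]

/-- The sum of the weights `c` over the fibre of `f` above `t`. -/
def fiberSum (c : ι → ℤ) (f : ι → G) (t : G) : ℤ := ∑ x with f x = t, c x

theorem fiberSum_neg [InvolutiveNeg ι] [InvolutiveNeg G] {c : ι → ℤ} {f : ι → G} (hc : c.Odd)
    (hf : f.Odd) (t : G) : fiberSum c f (-t) = -fiberSum c f t := by
  rw [fiberSum, fiberSum, Finset.sum_filter, Finset.sum_filter, ← Finset.sum_neg_distrib,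
    ← neg_involutive.bijective.sum_comp]
  refine Finset.sum_congr rfl fun x _ ↦ ?_
  simp only [hf x, hc x, neg_inj]
  split_ifs <;> simp

theorem sum_intCast_mul_pow_val [InvolutiveNeg ι] {R : Type*} [CommRing R] {c : ι → ℤ}
    {f : ι → ZMod 3} (hc : c.Odd) (hf : f.Odd) (ζ : R) :
    ∑ x, (c x : R) * ζ ^ (f x).val = fiberSum c f 1 * (ζ - ζ ^ 2) := by
  have hfiber (t : ZMod 3) :
      ∑ x with f x = t, (c x : R) * ζ ^ (f x).val = fiberSum c f t * ζ ^ t.val := by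
    rw [fiberSum, Int.cast_sum, Finset.sum_mul]
    refine Finset.sum_congr rfl fun x hx ↦ ?_
    rw [(Finset.mem_filter.mp hx).2]
  have h0 : fiberSum c f 0 = 0 := by
    have := fiberSum_neg hc hf 0
    rw [neg_zero] at this
    omega
  have h2 : fiberSum c f 2 = -fiberSum c f 1 := fiberSum_neg hc hf 1
  have hexpand : ∑ x, (c x : R) * ζ ^ (f x).val =
      fiberSum c f 0 * ζ ^ 0 + fiberSum c f 1 * ζ ^ 1 + fiberSum c f 2 * ζ ^ 2 := by
    rw [← Finset.sum_fiberwise _ f, Finset.sum_congr rfl fun t _ ↦ hfiber t]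
    exact Fin.sum_univ_three _
  rw [hexpand, h0, h2]
  push_cast
  ring

theorem card_mul_card_fiber {A : Type*} [AddGroup A] [Fintype A] [AddMonoid G] [Fintype G]
    {g : A →+ G} (hg : Function.Surjective g) (t : G) :
    Fintype.card G * Finset.card {x | g x = t} = Fintype.card A := by
  have hfiber := Finset.card_eq_sum_card_fiberwise (f := g) (s := Finset.univ)
    (t := Finset.univ) (by simp)
  rw [Finset.sum_congr rfl fun s _ ↦ AddMonoidHom.card_fiber_eq_of_mem_range g (hg s) (hg t)]
    at hfiber
  simpa using hfiber.symm

theorem odd_fiberSum_quadraticChar {F : Type*} [Field F] [Fintype F] [DecidableEq F]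
    [AddMonoid G] {g : F →+ G} (hg : Function.Surjective g) {r : F → F} (hr : r.Bijective)
    (hr0 : r 0 = 0) (hq : Odd (Fintype.card F)) {t : G} (ht : t ≠ 0) :
    Odd (fiberSum (quadraticChar F) (fun x ↦ g (r x)) t) := by
  have := Fintype.ofSurjective g hg
  have hcard : Finset.card {x | g (r x) = t} = Finset.card {y | g y = t} :=
    Finset.card_nbij r (fun _ ↦ by simp) hr.1.injOn fun y hy ↦ by
      obtain ⟨x, rfl⟩ := hr.2 y
      exact ⟨x, by simpa using hy, rfl⟩
  have hone : ∀ x ∈ ({x | g (r x) = t} : Finset F), ((quadraticChar F x : ℤ) : ZMod 2) = 1 := by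
    intro x hx
    have hx0 : x ≠ 0 := by
      rintro rfl
      exact ht (by simpa [hr0, eq_comm] using hx)
    obtain h | h := quadraticChar_dichotomy hx0 <;> simp [h]
  rw [← ZMod.intCast_eq_one_iff_odd, fiberSum, Int.cast_sum, Finset.sum_congr rfl hone,
    Finset.sum_const, nsmul_one, ZMod.natCast_eq_one_iff_odd, hcard]
  exact (Nat.odd_mul.mp (card_mul_card_fiber hg t ▸ hq)).2

end FiberSum

section TraceChar

variable {p : ℕ} [Fact p.Prime] {F : Type*} [Field F] [Algebra (ZMod p) F]

theorem trace_pow_pow [Finite F] (n : ℕ) (x : F) :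
    Algebra.trace (ZMod p) F (x ^ p ^ n) = Algebra.trace (ZMod p) F x := by
  induction n with
  | zero => rw [pow_zero, pow_one]
  | succ n ih =>
    have hfrob := Algebra.trace_eq_of_algEquiv
      (FiniteField.frobeniusAlgEquivOfAlgebraic (ZMod p) F) (x ^ p ^ n)
    simpa only [FiniteField.coe_frobeniusAlgEquivOfAlgebraic, ZMod.card, ← pow_mul, ← pow_succ,
      ih] using hfrob

variable {R : Type*} [CommRing R] {ζ : R}

variable (F) in
/-- The additive character `x ↦ ζ ^ Tr x` of `F`, for a `p`-th root of unity `ζ`. -/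
noncomputable def traceChar (hζ : ζ ^ p = 1) : AddChar F R :=
  (AddChar.zmodChar p hζ).compAddMonoidHom (Algebra.trace (ZMod p) F).toAddMonoidHom

theorem traceChar_apply (hζ : ζ ^ p = 1) (x : F) :
    traceChar F hζ x = ζ ^ (Algebra.trace (ZMod p) F x).val := rfl

theorem isPrimitive_traceChar [Finite F] (hζ : ζ ^ p = 1) (hζ1 : ζ ≠ 1) :
    (traceChar F hζ).IsPrimitive := by
  refine AddChar.IsPrimitive.of_ne_one fun h ↦ hζ1 ?_
  obtain ⟨x, hx⟩ := Algebra.trace_surjective (ZMod p) F 1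
  have : Fact (1 < p) := ⟨(Fact.out : p.Prime).one_lt⟩
  simpa [traceChar_apply, hx, ZMod.val_one] using DFunLike.congr_fun h x

end TraceChar

section Parseval

variable {F : Type*} [Field F] [Fintype F]

theorem sum_sq_sum_mul_addChar {R : Type*} [CommRing R] [IsDomain R] {ψ : AddChar F R}
    (hψ : ψ.IsPrimitive) {r : F → F} (hr : r.Injective) (hodd : r.Odd) (f : F → R) :
    ∑ b, (∑ x, f x * ψ (b * r x)) ^ 2 = Fintype.card F * ∑ x, f x * f (-x) := by
  classical
  have hsq (b : F) : (∑ x, f x * ψ (b * r x)) ^ 2 =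
      ∑ x, ∑ y, f x * f y * ψ (b * (r x + r y)) := by
    rw [sq, Finset.sum_mul_sum]
    refine Finset.sum_congr rfl fun x _ ↦ Finset.sum_congr rfl fun y _ ↦ ?_
    rw [mul_add, AddChar.map_add_eq_mul]
    ring
  have hzero (x y : F) : r x + r y = 0 ↔ y = -x := by
    rw [← hr.eq_iff (a := y), hodd x, eq_neg_iff_add_eq_zero, add_comm]
  rw [Finset.sum_congr rfl fun b _ ↦ hsq b, Finset.sum_comm, Finset.mul_sum]
  refine Finset.sum_congr rfl fun x _ ↦ ?_
  rw [Finset.sum_comm]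
  simp only [← Finset.mul_sum, AddChar.sum_mulShift _ hψ, hzero, Nat.cast_ite, Nat.cast_zero,
    mul_ite, mul_zero, Finset.sum_ite_eq', Finset.mem_univ, if_true]
  ring

variable [DecidableEq F]

theorem odd_quadraticChar (hneg : quadraticChar F (-1) = -1) :
    Function.Odd (quadraticChar F : F → ℤ) := fun x ↦ by
  rw [← neg_one_mul, map_mul, hneg, neg_one_mul]

theorem sum_quadraticChar_mul_neg (hneg : quadraticChar F (-1) = -1) :
    ∑ x : F, quadraticChar F x * quadraticChar F (-x) = -(Fintype.card F - 1) := by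
  have hterm (x : F) : quadraticChar F x * quadraticChar F (-x) = if x = 0 then 0 else -1 := by
    split_ifs with hx
    · simp [hx]
    · rw [odd_quadraticChar hneg, mul_neg, ← sq, quadraticChar_sq_one hx]
  simp only [hterm, Finset.sum_ite, Finset.sum_const]
  simp [Finset.filter_ne', Finset.card_erase_of_mem, Nat.cast_sub Fintype.card_pos]

theorem three_mul_sum_sq_fiberSum_trace [Algebra (ZMod 3) F] (hneg : quadraticChar F (-1) = -1)
    {r : F → F} (hr : r.Injective) (hodd : r.Odd) :
    3 * ∑ b, fiberSum (quadraticChar F) (fun x ↦ Algebra.trace (ZMod 3) F (b * r x)) 1 ^ 2 =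
      (Fintype.card F * (Fintype.card F - 1) : ℤ) := by
  have hζ := Complex.isPrimitiveRoot_exp 3 three_ne_zero
  set ζ := Complex.exp (2 * Real.pi * Complex.I / (3 : ℕ))
  have hsum (b : F) : ∑ x, ((quadraticChar F x : ℤ) : ℂ) * traceChar F hζ.pow_eq_one (b * r x) =
      fiberSum (quadraticChar F) (fun x ↦ Algebra.trace (ZMod 3) F (b * r x)) 1 * (ζ - ζ ^ 2) :=
    sum_intCast_mul_pow_val (odd_quadraticChar hneg) (fun x ↦ by rw [hodd, mul_neg, map_neg]) ζ
  have hsq : (ζ - ζ ^ 2) ^ 2 = -3 := by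
    have hgeom := hζ.geom_sum_eq_zero (by decide)
    simp only [Finset.sum_range_succ, Finset.sum_range_zero] at hgeom
    linear_combination (ζ ^ 2 - 3 * ζ + 3) * hgeom
  have hparseval := sum_sq_sum_mul_addChar
    (isPrimitive_traceChar (F := F) hζ.pow_eq_one (hζ.ne_one (by decide))) hr hodd
    fun x ↦ ((quadraticChar F x : ℤ) : ℂ)
  have hright := congrArg (Int.cast : ℤ → ℂ) (sum_quadraticChar_mul_neg hneg)
  push_cast at hright
  simp only [hsum, mul_pow, hsq, hright, ← Finset.sum_mul] at hparseval
  rw [← Int.cast_inj (α := ℂ)]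
  push_cast
  linear_combination -hparseval

end Parseval

section ReeTitsMap

variable {F : Type*} [Field F]

/-- The polynomial map whose trace is the argument of the character sum, up to a Frobenius twist
when `φ ∘ φ` is the cube map. -/
def reeTitsMap (φ : F →+* F) (u x : F) : F :=
  φ x ^ 2 * x ^ 3 + φ u * φ x - u ^ 2 * x

theorem reeTitsMap_zero (φ : F →+* F) (u : F) : reeTitsMap φ u 0 = 0 := by
  simp [reeTitsMap]

theorem odd_reeTitsMap (φ : F →+* F) (u : F) : (reeTitsMap φ u).Odd := fun x ↦ by
  simp only [reeTitsMap, map_neg]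
  ring

variable [CharP F 3] {φ : F →+* F}

theorem reeTitsMap_sub_factor_ne_zero_of_sq_eq (hφ : ∀ z, φ (φ z) = z ^ 3) {y p : F}
    (hp : p ^ 2 = (p - y - φ y) * (y - 1)) :
    y ^ 2 - y * φ y + 1 + φ p - p ^ 2 ≠ 0 := by
  intro hy
  have h3 : (3 : F) = 0 := CharP.ofNat_eq_zero F 3
  have hp' := congrArg φ hp
  simp only [map_mul, map_pow, map_sub, map_one, hφ] at hp'
  obtain ⟨b, rfl⟩ : ∃ b, y = b + 1 := ⟨y - 1, by ring⟩
  obtain ⟨l, hl⟩ : ∃ l, l = φ b := ⟨φ b, rfl⟩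
  simp only [map_add, map_one, ← hl] at hy hp hp'
  have hP : φ p = b * (p + b) + l - 1 := by
    linear_combination hy + hp - (b ^ 2 + b) * h3
  have hb : b ≠ 0 := by
    rintro rfl
    have hp0 : p = 0 := by simpa using hp
    simp [hp0, hl] at hP
  obtain ⟨s, hs⟩ : ∃ s, p = b * (s - 1) := ⟨p / b + 1, by field_simp; ring⟩
  rw [hs] at hp
  have hls : l = 1 - b * s ^ 2 := by
    refine mul_left_cancel₀ hb ?_
    linear_combination hp + (b ^ 2 * s - b ^ 2 - b) * h3
  have hPs : φ p = b * s * (b - s) := by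
    rw [hP, hls, hs]
    ring
  have hbs : b ^ 2 * ((b - s) * (s ^ 3 - 1)) = 0 := by
    rw [hPs, hls] at hp'
    linear_combination -hp' + (1 + b + b ^ 2 - b * s ^ 2 - b ^ 2 * s ^ 2 - b ^ 3 * s ^ 2) * h3
  have hp0 : p = 0 := by
    rcases mul_eq_zero.mp hbs with h | h
    · exact absurd h (pow_ne_zero 2 hb)
    rcases mul_eq_zero.mp h with h | h
    · simpa [h] using hPs
    · have hs1 : (s - 1) ^ 3 = 0 := by linear_combination h - (s ^ 2 - s) * h3
      simpa [pow_eq_zero_iff three_ne_zero |>.mp hs1] using hs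
  have hs1 : s = 1 := by simpa [hp0, hb, sub_eq_zero] using hs.symm
  have hb1 : b = 1 := by simpa [hp0, hs1, hb, sub_eq_zero] using hPs.symm
  simp [hs1, hb1, hl] at hls

theorem reeTitsMap_sub_factor_ne_zero (hφ : ∀ z, φ (φ z) = z ^ 3) (y p : F) :
    y ^ 2 - y * φ y + 1 + φ p - p ^ 2 ≠ 0 := by
  intro hy
  have hφy := congrArg φ hy
  simp only [map_mul, map_pow, map_sub, map_one, map_add, hφ, map_zero] at hφy
  -- The factors obtained by eliminating `φ p` are exchanged by `y ↦ -y`.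
  have hfactor : (p ^ 2 - (p - y - φ y) * (y - 1)) * (p ^ 2 + (p + y + φ y) * (y + 1)) = 0 := by
    have hP : φ p = p ^ 2 - 1 - y ^ 2 + y * φ y := by linear_combination hy
    rw [hP] at hφy
    have h3 : (3 : F) = 0 := CharP.ofNat_eq_zero F 3
    linear_combination -hφy + (p ^ 2 - y ^ 2 + p ^ 2 * y ^ 2 + p ^ 3 + y ^ 3 * φ y) * h3
  rcases mul_eq_zero.mp hfactor with h | h
  · exact reeTitsMap_sub_factor_ne_zero_of_sq_eq hφ (by linear_combination h) hy
  · refine reeTitsMap_sub_factor_ne_zero_of_sq_eq hφ (y := -y) (p := p) ?_ ?_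
    · rw [map_neg]; linear_combination h
    · rw [map_neg]; linear_combination hy

theorem injective_reeTitsMap (hφ : ∀ z, φ (φ z) = z ^ 3) (u : F) :
    (reeTitsMap φ u).Injective := by
  intro x y hxy
  have h3 : (3 : F) = 0 := CharP.ofNat_eq_zero F 3
  by_contra hne
  have hyx : y - x ≠ 0 := sub_ne_zero.mpr (Ne.symm hne)
  -- Halving is negation in characteristic `3`: the midpoint of `x` and `y` is `-(x + y)` and half
  -- their difference is `y - x`.
  obtain ⟨d, z, hd, rfl, rfl⟩ : ∃ d z, d ≠ 0 ∧ x = d * z + d ∧ y = d * z - d := by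
    refine ⟨y - x, -(x + y) / (y - x), hyx, ?_, ?_⟩ <;> rw [mul_div_cancel₀ _ hyx]
    · linear_combination x * h3
    · linear_combination y * h3
  have hφd : φ d ≠ 0 := by simpa using hd
  refine reeTitsMap_sub_factor_ne_zero hφ (φ z) (u / (φ d * d)) ?_
  simp only [reeTitsMap, map_div₀, map_mul, map_add, map_sub, hφ] at hxy ⊢
  field_simp
  generalize φ d = D at *
  generalize φ z = Z at *
  generalize φ u = A at *
  linear_combination -hxy + (D * A + D ^ 2 * Z * z * d ^ 3 * 4 + D ^ 2 * Z * z ^ 3 * d ^ 3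
    + D ^ 2 * Z ^ 2 * z ^ 2 * d ^ 3 * 2 + D ^ 2 * Z ^ 2 * d ^ 3 + D ^ 2 * z ^ 2 * d ^ 3 * 2
    + D ^ 2 * d ^ 3 - d * u ^ 2) * h3

end ReeTitsMap

section ReeTitsSum

theorem three_pow_dvd_of_pow_dvd_mul_sub_sq {R : Type*} [CommRing R] [IsDomain R] {ζ y : R}
    {k : ℕ} (hζ : 1 + ζ + ζ ^ 2 = 0) (h3 : (3 : R) ≠ 0)
    (h : (ζ - 1) ^ (2 * k + 1) ∣ y * (ζ - ζ ^ 2)) : 3 ^ k ∣ y := by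
  have hζ1 : ζ - 1 ≠ 0 := fun h1 ↦ h3 (by linear_combination hζ - (ζ + 2) * h1)
  have hsq : (ζ - 1) ^ 2 = -ζ * 3 := by linear_combination hζ
  have hy : y * (ζ - ζ ^ 2) = y * -ζ * (ζ - 1) := by ring
  rw [pow_succ, pow_mul, hsq, mul_pow, hy, mul_dvd_mul_iff_right hζ1] at h
  have hy' : y = y * -ζ * -ζ ^ 2 := by linear_combination y * (1 - ζ) * hζ
  rw [hy']
  exact (dvd_of_mul_left_dvd h).mul_right _

theorem quadraticChar_neg_one_of_card_eq {F : Type*} [Field F] [Fintype F] [DecidableEq F]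
    [CharP F 3] {h : ℕ} (hcard : Fintype.card F = 3 ^ (2 * h + 1)) :
    quadraticChar F (-1) = -1 := by
  have hF : ringChar F ≠ 2 := by simp [ringChar.eq F 3]
  have hmod : ((3 ^ (2 * h + 1) : ℕ) : ZMod 4) = 3 := by
    push_cast
    rw [pow_succ, pow_mul, show (3 : ZMod 4) ^ 2 = 1 by decide, one_pow, one_mul]
  rw [quadraticChar_neg_one hF, hcard, hmod]
  decide

variable {F : Type*} [Field F] [CharP F 3]

variable (F) in
/-- The endomorphism `x ↦ x ^ 3 ^ (h + 1)`, a square root of the Frobenius of the field with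
`3 ^ (2 * h + 1)` elements. -/
noncomputable abbrev titsEndo (h : ℕ) : F →+* F :=
  iterateFrobenius F 3 (h + 1)

variable [Fintype F] {h : ℕ}

theorem titsEndo_titsEndo (hcard : Fintype.card F = 3 ^ (2 * h + 1)) (z : F) :
    titsEndo F h (titsEndo F h z) = z ^ 3 := by
  rw [iterateFrobenius_def, iterateFrobenius_def, ← pow_mul, ← pow_add,
    show h + 1 + (h + 1) = 2 * h + 1 + 1 by ring, pow_succ, pow_mul, ← hcard, FiniteField.pow_card]

variable [Algebra (ZMod 3) F]

theorem trace_titsEndo_mul_reeTitsMap (hcard : Fintype.card F = 3 ^ (2 * h + 1)) (c u x : F) :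
    Algebra.trace (ZMod 3) F (titsEndo F h c * reeTitsMap (titsEndo F h) u x) =
      Algebra.trace (ZMod 3) F
        (c * x ^ (3 ^ (h + 1) + 2) + (c * u - c ^ 3 ^ (h + 1) * u ^ 2) * x) := by
  have htwist : titsEndo F h c * reeTitsMap (titsEndo F h) u x =
      titsEndo F h (c * (titsEndo F h x * x ^ 2 + u * x)) - titsEndo F h c * u ^ 2 * x := by
    simp only [reeTitsMap, map_add, map_mul, map_pow, titsEndo_titsEndo hcard]
    ring
  rw [htwist, map_sub, iterateFrobenius_def, trace_pow_pow, ← map_sub]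
  simp only [iterateFrobenius_def]
  ring_nf

variable [DecidableEq F]

/-- The integer `N b` for which the sum of `χ x * ζ ^ Tr (b * reeTitsMap φ u x)` over `x` is
`N b * (ζ - ζ ^ 2)`. -/
noncomputable def reeTitsCoeff (h : ℕ) (u b : F) : ℤ :=
  fiberSum (quadraticChar F)
    (fun x ↦ Algebra.trace (ZMod 3) F (b * reeTitsMap (titsEndo F h) u x)) 1

theorem sum_quadraticChar_mul_pow_trace (hcard : Fintype.card F = 3 ^ (2 * h + 1)) {R : Type*}
    [CommRing R] (ζ : R) (c u : F) :
    ∑ x : F, ((quadraticChar F x : ℤ) : R) * ζ ^ (Algebra.trace (ZMod 3) F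
        (c * x ^ (3 ^ (h + 1) + 2) + (c * u - c ^ 3 ^ (h + 1) * u ^ 2) * x)).val =
      reeTitsCoeff h u (titsEndo F h c) * (ζ - ζ ^ 2) := by
  simp only [← trace_titsEndo_mul_reeTitsMap hcard]
  exact sum_intCast_mul_pow_val (odd_quadraticChar (quadraticChar_neg_one_of_card_eq hcard))
    (fun x ↦ by rw [odd_reeTitsMap, mul_neg, map_neg]) ζ

theorem three_pow_dvd_reeTitsCoeff (hcard : Fintype.card F = 3 ^ (2 * h + 1)) (u b : F) :
    3 ^ h ∣ reeTitsCoeff h u b := by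
  obtain ⟨c, rfl⟩ := (Finite.injective_iff_surjective.mp (titsEndo F h).injective) b
  set ζ := WittCyclotomic.uniformizer 3 F + 1 with hζdef
  have hζ : 1 + ζ + ζ ^ 2 = 0 := by
    have := WittCyclotomic.eval_cyclotomic_uniformizer_add_one 3 F
    simp only [Polynomial.cyclotomic_three, Polynomial.eval_add, Polynomial.eval_pow,
      Polynomial.eval_X, Polynomial.eval_one] at this
    linear_combination this
  have hζ3 : ζ ^ 3 = 1 := by linear_combination (ζ - 1) * hζ
  have hhalf : Fintype.card F / 2 = (3 ^ (2 * h + 1) - 1) / 2 := by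
    have : Odd (3 ^ (2 * h + 1)) := Odd.pow (by decide)
    grind
  have hπ : WittCyclotomic.uniformizer 3 F ^ (2 * h + 1) ∣
      ∑ x : F, (WittCyclotomic.teichmuller 3 F ^ (Fintype.card F / 2)) x * traceChar F hζ3
        (c * x ^ (3 ^ (h + 1) + 2) + (c * u - c ^ 3 ^ (h + 1) * u ^ 2) * x) := by
    refine pow_dvd_sum_pow_mul_addChar (p := 3) (WittCyclotomic.rightInverse_teichmuller 3 F)
      (fun _ ↦ WittCyclotomic.uniformizer_dvd_of_reduction_eq_zero) (fun x ↦ ?_) ?_ _ _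
    · have htrace := trace_pow_pow (p := 3) 1 x
      rw [pow_one] at htrace
      rw [traceChar_apply, traceChar_apply, htrace]
    · rw [hhalf, hcard]
      exact fun j hj k hk ↦ le_sum_digits_add_sum_digits (by omega) (by omega)
  have hF : ringChar F ≠ 2 := by simp [ringChar.eq F 3]
  simp only [← intCast_quadraticChar_eq_pow (WittCyclotomic.rightInverse_teichmuller 3 F) hF,
    traceChar_apply, sum_quadraticChar_mul_pow_trace hcard] at hπ
  have h3 := WittCyclotomic.natCast_ne_zero 3 F
  refine pow_dvd_of_natCast_pow_dvd_intCast (WittCyclotomic.reduction 3 F) h3 ?_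
  rw [← add_sub_cancel_right (WittCyclotomic.uniformizer 3 F) 1, ← hζdef] at hπ
  exact three_pow_dvd_of_pow_dvd_mul_sub_sq hζ h3 hπ

theorem odd_reeTitsCoeff (hcard : Fintype.card F = 3 ^ (2 * h + 1)) (u : F) {b : F} (hb : b ≠ 0) :
    Odd (reeTitsCoeff h u b) := by
  have hr := Finite.injective_iff_bijective.mp
    (injective_reeTitsMap (titsEndo_titsEndo hcard) u)
  exact odd_fiberSum_quadraticChar (g := (Algebra.trace (ZMod 3) F).toAddMonoidHom)
    (Algebra.trace_surjective (ZMod 3) F) ((mulLeft_bijective₀ b hb).comp hr)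
    (by simp [reeTitsMap_zero]) (hcard ▸ Odd.pow (by decide)) one_ne_zero

theorem nine_pow_le_sq_reeTitsCoeff (hcard : Fintype.card F = 3 ^ (2 * h + 1)) (u : F) {b : F}
    (hb : b ≠ 0) : 9 ^ h ≤ reeTitsCoeff h u b ^ 2 := by
  have hdvd := pow_dvd_pow_of_dvd (three_pow_dvd_reeTitsCoeff hcard u b) 2
  have hne : reeTitsCoeff h u b ≠ 0 := fun h0 ↦ by simpa [h0] using odd_reeTitsCoeff hcard u hb
  rw [← pow_mul, mul_comm, pow_mul] at hdvd
  exact Int.le_of_dvd (by positivity) hdvd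

theorem sum_sq_reeTitsCoeff (hcard : Fintype.card F = 3 ^ (2 * h + 1)) (u : F) :
    ∑ b ∈ Finset.univ.erase 0, reeTitsCoeff h u b ^ 2 =
      ∑ _ ∈ (Finset.univ : Finset F).erase 0, (9 : ℤ) ^ h := by
  have hparseval :
      3 * ∑ b, reeTitsCoeff h u b ^ 2 = (Fintype.card F * (Fintype.card F - 1) : ℤ) :=
    three_mul_sum_sq_fiberSum_trace (quadraticChar_neg_one_of_card_eq hcard)
      (injective_reeTitsMap (titsEndo_titsEndo hcard) u) (odd_reeTitsMap (titsEndo F h) u)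
  have hzero : reeTitsCoeff h u (0 : F) = 0 := by simp [reeTitsCoeff, fiberSum]
  have hcard' : (Fintype.card F : ℤ) = 3 * 9 ^ h := by
    rw [hcard, pow_succ', pow_mul]
    norm_num
  rw [← Finset.add_sum_erase _ _ (Finset.mem_univ 0), hzero] at hparseval
  rw [Finset.sum_const, Finset.card_erase_of_mem (Finset.mem_univ _), Finset.card_univ,
    nsmul_eq_mul, Nat.cast_sub Fintype.card_pos]
  push_cast
  linarith [congrArg (· * ((Fintype.card F : ℤ) - 1)) hcard']

theorem sq_reeTitsCoeff (hcard : Fintype.card F = 3 ^ (2 * h + 1)) (u : F) {b : F} (hb : b ≠ 0) :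
    reeTitsCoeff h u b ^ 2 = 9 ^ h :=
  ((Finset.sum_eq_sum_iff_of_le fun _ hx ↦
    nine_pow_le_sq_reeTitsCoeff hcard u (Finset.ne_of_mem_erase hx)).mp
    (sum_sq_reeTitsCoeff hcard u).symm b (Finset.mem_erase.mpr ⟨hb, Finset.mem_univ b⟩)).symm

end ReeTitsSum

theorem reeTits_char_sum_general {F R : Type*} [Field F] [Fintype F] [DecidableEq F]
    [Algebra (ZMod 3) F] [CommRing R] {ζ : R} (hζ : 1 + ζ + ζ ^ 2 = 0) {h : ℕ}
    (hcard : Fintype.card F = 3 ^ (2 * h + 1)) {c : F} (hc : c ≠ 0) (u : F) :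
    (∑ x : F, ((quadraticChar F x : ℤ) : R) * ζ ^ (Algebra.trace (ZMod 3) F
        (c * x ^ (3 ^ (h + 1) + 2) + (c * u - c ^ 3 ^ (h + 1) * u ^ 2) * x)).val) ^ 2 =
      -3 ^ (2 * h + 1) := by
  have : CharP F 3 := charP_of_injective_algebraMap (algebraMap (ZMod 3) F).injective 3
  have hsq : (ζ - ζ ^ 2) ^ 2 = -3 := by linear_combination (ζ ^ 2 - 3 * ζ + 3) * hζ
  rw [sum_quadraticChar_mul_pow_trace hcard, mul_pow, hsq, ← Int.cast_pow,
    sq_reeTitsCoeff hcard u ((map_ne_zero _).mpr hc), pow_succ, pow_mul]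
  push_cast
  norm_num

open Complex in
theorem reeTits_char_sum {F : Type*} [Field F] [Fintype F] [DecidableEq F]
    [Algebra (ZMod 3) F] (h : ℕ)
    (hcard : Fintype.card F = 3 ^ (2 * h + 1)) (β a : F) (hβ : β ≠ 0) (ha : a ≠ 0) :
    let α := 3 ^ (h + 1)
    let ψ : F → ℂ := fun x =>
      Complex.exp (2 * Real.pi * Complex.I *
        ((Algebra.trace (ZMod 3) F x).val : ℂ) / 3)
    (∑ x ∈ Finset.univ \ {0},
        ((quadraticChar F x : ℤ) : ℂ) *
          ψ (x ^ (α + 2) + (β ^ (α - 1) * a ^ α - β ^ (2 * (α - 1)) * a ^ (2 * α)) * x)) ^ 2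
      = -((3 : ℂ) ^ (2 * h + 1)) := by
  intro α ψ
  set u := β ^ (α - 1) * a ^ α with hu
  have hu2 : β ^ (2 * (α - 1)) * a ^ (2 * α) = u ^ 2 := by rw [hu]; ring
  have hprim := Complex.isPrimitiveRoot_exp 3 three_ne_zero
  set ζ := Complex.exp (2 * Real.pi * Complex.I / (3 : ℕ)) with hζ
  have hgeom : 1 + ζ + ζ ^ 2 = 0 := by
    simpa [Finset.sum_range_succ] using hprim.geom_sum_eq_zero (by decide)
  have hψ (x : F) : ψ x = ζ ^ (Algebra.trace (ZMod 3) F x).val := by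
    rw [hζ, ← Complex.exp_nat_mul]
    exact congrArg Complex.exp (by push_cast; ring)
  rw [hu2, Finset.sum_subset (Finset.subset_univ _) fun x _ hx ↦ by
    rw [show x = 0 by simpa using hx, MulChar.map_zero, Int.cast_zero, zero_mul]]
  simpa [hψ, α] using reeTits_char_sum_general hgeom hcard one_ne_zero u
end

section
/- With the periodic carry-sequence setup (m odd, r = (m+1)/2, sequences (a_i), (c_i) periodic with period m, 0 ≤ a_i ≤ 2, 0 ≤ c_i ≤ 3, b_i = 5 + a_i − a_{i−1} − a_{i−r}, and 0 ≤ b_i − 3c_i + c_{i−1} ≤ 2 for all i ∈ ℤ): the carries satisfy Σ_{i=0}^{m−1} c_i ≤ 2m. -/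
/-!
Let `σ` be the shift `i ↦ i - r`, so that `σ (σ i)` is `i - 1` modulo `m`; only the lower bound
`3 c i ≤ 5 + a i - a (σ i) - a (σ (σ i)) + c (σ (σ i))` matters. Averaging it merely gives
`2 ∑ c ≤ 5 m - ∑ a`, which is too weak when `a` is small on average; there one has to use that the
carries are integers. Put `z = c i - 2` and `x = a i`, and record the past of `i` by the numbers
`u = c (σ (σ i)) - 2 - a (σ i) - a (σ (σ i))` and `w = c (σ i) - 2 - a (σ i)`. The inequality
becomes `3 z ≤ 1 + x + u`, and passing from `σ i` to `i` replaces `(u, w)` by `(w - x, z - x)`.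
A suitable function of `(u, w)` drops by at least `z` in each such step, and its drops add up to
zero because `σ` is a permutation.
-/

/-- The potential of the carry recursion in the state `(u, w)`, which bounds the excess `z` of a
carry over `2` by the drop it causes. The last entry is `u / 2` rounded up, which is where the
integrality of the carries enters. -/
def carryPotential (u w : ℤ) : ℤ :=
  max (max u w) (max (u + w) ((u + 1) / 2))

theorem add_carryPotential_le {u w x z : ℤ} (hx : 0 ≤ x) (hz : 3 * z ≤ 1 + x + u) :
    z + carryPotential (w - x) (z - x) ≤ carryPotential u w := by
  have hP : carryPotential u w = max (max u w) (max (u + w) ((u + 1) / 2)) := rfl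
  have hgain : z ≤ x ∨ 2 * (z - x) ≤ u := by omega
  have hfst : z + (w - x) ≤ carryPotential u w := by omega
  have hsnd : z + (z - x) ≤ carryPotential u w := by omega
  have hsum : z + ((w - x) + (z - x)) ≤ carryPotential u w := by omega
  have hhalf : z + (w - x + 1) / 2 ≤ carryPotential u w := by omega
  rw [carryPotential, ← max_add_add_left, ← max_add_add_left, ← max_add_add_left]
  exact max_le (max_le hfst hsnd) (max_le hsum hhalf)

theorem carry_sum_bound_general {ι : Type*} [Fintype ι] (σ : Equiv.Perm ι) (a c : ι → ℤ)
    (ha : ∀ i, 0 ≤ a i)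
    (hstep : ∀ i, 3 * c i ≤ 5 + a i - a (σ i) - a (σ (σ i)) + c (σ (σ i))) :
    ∑ i, c i ≤ 2 * (Fintype.card ι : ℤ) := by
  let P : ι → ℤ := fun i => carryPotential (c (σ i) - 2 - a (σ i) - a i) (c i - 2 - a i)
  have hdrop : ∀ i, c i - 2 + P i ≤ P (σ i) := fun i =>
    add_carryPotential_le (ha i) (by linarith [hstep i])
  have htotal : ∑ i, (c i - 2 + P i) ≤ ∑ i, P (σ i) := Finset.sum_le_sum fun i _ => hdrop i
  rw [Equiv.sum_comp σ P, Finset.sum_add_distrib, Finset.sum_sub_distrib, Finset.sum_const,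
    Finset.card_univ, nsmul_eq_mul] at htotal
  linarith

theorem periodic_apply_zmod_cast {α : Type*} {m : ℕ} {f : ℤ → α} (hf : Function.Periodic f m)
    (i : ℤ) : f (i : ZMod m).cast = f i := by
  rw [ZMod.coe_intCast, Int.emod_def, mul_comm, ← smul_eq_mul, hf.sub_zsmul_eq]

theorem sum_zmod_cast {M : Type*} [AddCommMonoid M] (m : ℕ) [NeZero m] (f : ℤ → M) :
    ∑ j : ZMod m, f j.cast = ∑ i ∈ Finset.range m, f i := by
  obtain ⟨n, rfl⟩ := Nat.exists_eq_succ_of_ne_zero (NeZero.ne m)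
  exact (Finset.sum_range fun i : ℕ => f i).symm

theorem sum_range_carry_le_of_periodic {m : ℕ} [NeZero m] {r : ℤ} {a c : ℤ → ℤ}
    (ha_per : Function.Periodic a m) (hc_per : Function.Periodic c m) (ha : ∀ i, 0 ≤ a i)
    (hstep : ∀ i, 3 * c i ≤ 5 + a i - a (i - r) - a (i - r - r) + c (i - r - r)) :
    ∑ i ∈ Finset.range m, c i ≤ 2 * (m : ℤ) := by
  have hstep_zmod : ∀ j : ZMod m, 3 * c j.cast ≤ 5 + a j.cast - a (j - r : ZMod m).cast
      - a (j - r - r : ZMod m).cast + c (j - r - r : ZMod m).cast := by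
    refine ZMod.intCast_surjective.forall.2 fun i => ?_
    simpa only [← Int.cast_sub, periodic_apply_zmod_cast ha_per,
      periodic_apply_zmod_cast hc_per] using hstep i
  have hsum := carry_sum_bound_general (Equiv.subRight (r : ZMod m)) (fun j => a j.cast)
    (fun j => c j.cast) (fun _ => ha _) hstep_zmod
  rwa [sum_zmod_cast, ZMod.card] at hsum

theorem carry_sum_bound (m : ℕ) (hm : Odd m)
    (a c : ℤ → ℤ)
    (ha_per : ∀ i : ℤ, a (i + m) = a i) (hc_per : ∀ i : ℤ, c (i + m) = c i)
    (ha : ∀ i : ℤ, 0 ≤ a i ∧ a i ≤ 2) (hc : ∀ i : ℤ, 0 ≤ c i ∧ c i ≤ 3)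
    (hs : ∀ i : ℤ,
      0 ≤ (5 + a i - a (i - 1) - a (i - ((m : ℤ) + 1) / 2)) - 3 * c i + c (i - 1) ∧
      (5 + a i - a (i - 1) - a (i - ((m : ℤ) + 1) / 2)) - 3 * c i + c (i - 1) ≤ 2) :
    ∑ i ∈ Finset.range m, c (i : ℤ) ≤ 2 * (m : ℤ) := by
  have : NeZero m := ⟨hm.pos.ne'⟩
  have hshift : ∀ i : ℤ, i - ((m : ℤ) + 1) / 2 - ((m : ℤ) + 1) / 2 = i - 1 - m := by
    obtain ⟨k, rfl⟩ := hm
    omega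
  refine sum_range_carry_le_of_periodic (r := ((m : ℤ) + 1) / 2) ha_per hc_per
    (fun i => (ha i).1) fun i => ?_
  rw [hshift, Function.Periodic.sub_eq ha_per, Function.Periodic.sub_eq hc_per]
  linarith [(hs i).1]
end
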